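/- arXiv:1309.1147 — 2 statements merged into one kernel-verified Lean document; each statement's English description precedes it below -/
import Mathlib

section
/- For every integer d ≥ 2 there exists M = M(d) such that every (d+1)-crossing curve γ: I → R^d can be subdivided into at most M convex curves; that is, the interval I can be partitioned into at most M closed subintervals I_1, …, I_k (k ≤ M) such that the restriction of γ to each I_j is a d-crossing curve. -/
open Set

/-- `h` is an (affine) hyperplane in `ℝ^d`: the solution set of a nontrivial
linear equation `∑ i, u i * x i = c`. -/
def IsHyperplane {d : ℕ} (h : Set (Fin d → ℝ)) : Prop :=
  ∃ (u : Fin d → ℝ) (c : ℝ), u ≠ 0 ∧ h = {x | ∑ i, u i * x i = c}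

/-- A curve `γ` is `k`-crossing on the interval `I` if for every hyperplane `h`
the set `{t ∈ I : γ t ∈ h}` has at most `k` elements. -/
def CurveCrossing {d : ℕ} (k : ℕ) (I : Set ℝ) (γ : ℝ → (Fin d → ℝ)) : Prop :=
  ∀ h : Set (Fin d → ℝ), IsHyperplane h → {t | t ∈ I ∧ γ t ∈ h}.encard ≤ (k : ℕ∞)

/-- The polygonal path `p 0 p 1 ⋯ p (n-1)`, as a subset of `ℝ^d`
(the union of its edges). -/
def PathSet {d n : ℕ} (p : Fin n → (Fin d → ℝ)) : Set (Fin d → ℝ) :=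
  ⋃ (i : Fin n) (h : (i : ℕ) + 1 < n), segment ℝ (p i) (p ⟨(i : ℕ) + 1, h⟩)

/-- A polygonal path is `k`-crossing if every hyperplane containing no edge of the
path intersects the path in at most `k` points. -/
def PathCrossing {d n : ℕ} (k : ℕ) (p : Fin n → (Fin d → ℝ)) : Prop :=
  ∀ h : Set (Fin d → ℝ), IsHyperplane h →
    (∀ (i : Fin n) (hi : (i : ℕ) + 1 < n), ¬ segment ℝ (p i) (p ⟨(i : ℕ) + 1, hi⟩) ⊆ h) →
    (PathSet p ∩ h).encard ≤ (k : ℕ∞)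

/-- A point sequence in `ℝ^d` is in general position if every at most `d+1` of the
points are affinely independent. -/
def GeneralPosition {d n : ℕ} (p : Fin n → (Fin d → ℝ)) : Prop :=
  ∀ s : Finset (Fin n), s.card ≤ d + 1 → AffineIndependent ℝ (fun i : s => p i)

/-- The sign (orientation) of an ordered `(d+1)`-tuple of points of `ℝ^d`: the sign of
the determinant of the `(d+1) × (d+1)` matrix whose `j`-th column is `(1, q j)`. -/
noncomputable def otSign {d : ℕ} (q : Fin (d + 1) → (Fin d → ℝ)) : ℝ :=
  Real.sign (Matrix.det (Matrix.of fun i j : Fin (d + 1) =>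
    (Fin.cons (1 : ℝ) (q j) : Fin (d + 1) → ℝ) i))

/-- A point sequence is order-type homogeneous if all of its increasing-index
`(d+1)`-tuples have the same nonzero sign. -/
def OrderTypeHomogeneous {d n : ℕ} (p : Fin n → (Fin d → ℝ)) : Prop :=
  ∃ σ : ℝ, σ ≠ 0 ∧ ∀ f : Fin (d + 1) → Fin n, StrictMono f →
    otSign (fun j => p (f j)) = σ

/-- The sign of a `(d+1)`-element subset of the index set of a point sequence:
the sign of the corresponding increasing-index `(d+1)`-tuple (junk value `0` if the
set does not have `d+1` elements). -/
noncomputable def finsetSign {d n : ℕ} (p : Fin n → (Fin d → ℝ)) (s : Finset (Fin n)) : ℝ :=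
  if h : s.card = d + 1 then otSign (fun j => p ((s.orderIsoOfFin h) j : Fin n)) else 0

/-- A point sequence in `ℝ^d` is in super-general position if for each `1 ≤ k ≤ d` its
projection to the first `k` coordinates is in general position. -/
def SuperGeneralPosition {d n : ℕ} (p : Fin n → (Fin d → ℝ)) : Prop :=
  ∀ (k : ℕ), 1 ≤ k → ∀ (hk : k ≤ d),
    GeneralPosition (fun i => fun j : Fin k => p i (Fin.castLE hk j))

/-- A point sequence in `ℝ^d` is super-order-type homogeneous if for each `1 ≤ k ≤ d` its
projection to the first `k` coordinates is order-type homogeneous. -/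
def SuperOrderTypeHomogeneous {d n : ℕ} (p : Fin n → (Fin d → ℝ)) : Prop :=
  ∀ (k : ℕ), 1 ≤ k → ∀ (hk : k ≤ d),
    OrderTypeHomogeneous (fun i => fun j : Fin k => p i (Fin.castLE hk j))

/-- `OTNum d n` is the smallest `N` such that every sequence of `N` points in general
position in `ℝ^d` contains an order-type homogeneous subsequence of length `n`. -/
noncomputable def OTNum (d n : ℕ) : ℕ :=
  sInf {N : ℕ | ∀ p : Fin N → (Fin d → ℝ), GeneralPosition p →
    ∃ f : Fin n → Fin N, StrictMono f ∧ OrderTypeHomogeneous (fun i => p (f i))}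

/-- `COTNum d n` is the smallest `N` such that every sequence of `N` points in
super-general position in `ℝ^d` contains a super-order-type homogeneous subsequence
of length `n`. -/
noncomputable def COTNum (d n : ℕ) : ℕ :=
  sInf {N : ℕ | ∀ p : Fin N → (Fin d → ℝ), SuperGeneralPosition p →
    ∃ f : Fin n → Fin N, StrictMono f ∧ SuperOrderTypeHomogeneous (fun i => p (f i))}

/-- The tower function: `twr 1 x = x` and `twr (i+1) x = 2 ^ twr i x`. -/
def twr (k x : ℕ) : ℕ := (fun y => 2 ^ y)^[k - 1] x

/-- `t` is an `ε`-sample of the interval `[a, b]`: an increasing tuple of points of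
`[a, b]` meeting every subinterval of `[a, b]` of length `ε`. -/
def IsEpsSample (a b ε : ℝ) {n : ℕ} (t : Fin n → ℝ) : Prop :=
  StrictMono t ∧ (∀ i, t i ∈ Set.Icc a b) ∧
    ∀ x : ℝ, Set.Icc x (x + ε) ⊆ Set.Icc a b → ∃ i, t i ∈ Set.Icc x (x + ε)

/-- All `(k+1)`-element subsets of the index interval `[a, b]` have the same sign. -/
def IntervalHomog {n : ℕ} (k : ℕ) (sgn : Finset (Fin n) → Bool) (a b : Fin n) : Prop :=
  ∃ σ : Bool, ∀ s : Finset (Fin n), s.card = k + 1 → (∀ i ∈ s, a ≤ i ∧ i ≤ b) → sgn s = σ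

/-- `c 0 = 0 < c 1 < ⋯ < c m = n - 1` are the cut points of the greedy partition of the
`k`-sequence on `Fin n` with sign function `sgn` into the `m` blocks
`[c 0, c 1], [c 1, c 2], …, [c (m-1), c m]` (consecutive blocks overlap in one point):
each block has all its `(k+1)`-element subsets of the same sign, and each block is
maximal with this property (cannot be extended to the right). -/
def IsGreedyPartition {n : ℕ} (k : ℕ) (sgn : Finset (Fin n) → Bool) (m : ℕ)
    (c : Fin (m + 1) → Fin n) : Prop :=
  (c 0 : ℕ) = 0 ∧ (c (Fin.last m) : ℕ) = n - 1 ∧ StrictMono c ∧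
    (∀ j : Fin m, IntervalHomog k sgn (c j.castSucc) (c j.succ)) ∧
    (∀ j : Fin m, ∀ e : Fin n, c j.succ < e → ¬ IntervalHomog k sgn (c j.castSucc) e)

/-- A `k`-sequence is a flip `k`-sequence if for every `k`-element subset `A` of indices
the sign sequence `(sgn (insert i A) : i ∉ A)` (indices in increasing order) has at most
one sign change; for `±`-valued sequences this says there are no positions `i < j < l`
with `sgn (insert i A) ≠ sgn (insert j A)` and `sgn (insert j A) ≠ sgn (insert l A)`. -/
def FlipSeq {n : ℕ} (k : ℕ) (sgn : Finset (Fin n) → Bool) : Prop :=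
  ∀ A : Finset (Fin n), A.card = k →
    ¬ ∃ i j l : Fin n, i < j ∧ j < l ∧ i ∉ A ∧ j ∉ A ∧ l ∉ A ∧
      sgn (insert i A) ≠ sgn (insert j A) ∧ sgn (insert j A) ≠ sgn (insert l A)

/-! ### Ramsey theorem for uniform hypergraphs -/

theorem sc_ramsey (n : ℕ) : ∀ p q : ℕ, ∃ N : ℕ, ∀ S : Finset ℕ, N ≤ S.card →
    ∀ f : Finset ℕ → Prop,
      (∃ T ⊆ S, T.card = p ∧ ∀ A ⊆ T, A.card = n → f A) ∨
      (∃ T ⊆ S, T.card = q ∧ ∀ A ⊆ T, A.card = n → ¬ f A) := by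
  induction n with
  | zero =>
    intro p q
    refine ⟨p + q, fun S hS f => ?_⟩
    by_cases hf : f ∅
    · obtain ⟨T, hT, hc⟩ := Finset.exists_subset_card_eq (show p ≤ S.card by omega)
      refine Or.inl ⟨T, hT, hc, fun A _ hA => ?_⟩
      rw [Finset.card_eq_zero] at hA
      rwa [hA]
    · obtain ⟨T, hT, hc⟩ := Finset.exists_subset_card_eq (show q ≤ S.card by omega)
      refine Or.inr ⟨T, hT, hc, fun A _ hA => ?_⟩
      rw [Finset.card_eq_zero] at hA
      rwa [hA]
  | succ n ih =>
    intro p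
    induction p with
    | zero =>
      intro q
      refine ⟨0, fun S _ f => Or.inl ⟨∅, by simp, by simp, fun A hA hc => ?_⟩⟩
      have := Finset.card_le_card hA
      simp at this
      simp [this] at hc
    | succ p ihp =>
      intro q
      induction q with
      | zero =>
        refine ⟨0, fun S _ f => Or.inr ⟨∅, by simp, by simp, fun A hA hc => ?_⟩⟩
        have := Finset.card_le_card hA
        simp at this
        simp [this] at hc
      | succ q ihq =>
        obtain ⟨N1, h1⟩ := ihp (q + 1)
        obtain ⟨N2, h2⟩ := ihq
        obtain ⟨N, hN⟩ := ih N1 N2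
        refine ⟨N + 1, fun S hS f => ?_⟩
        obtain ⟨x, hx⟩ : S.Nonempty := by
          rw [← Finset.card_pos]; omega
        have hcard : N ≤ (S.erase x).card := by
          rw [Finset.card_erase_of_mem hx]; omega
        have key : ∀ (g : Finset ℕ → Prop) (T T1 : Finset ℕ), T ⊆ S.erase x → T1 ⊆ T →
            (∀ A ⊆ T, A.card = n → g (insert x A)) →
            (∀ A ⊆ T1, A.card = n + 1 → g A) →
            ∀ A ⊆ insert x T1, A.card = n + 1 → g A := by
          intro g T T1 hT hT1 hg1 hg2 A hA hc
          by_cases hxA : x ∈ A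
          · rw [← Finset.insert_erase hxA]
            apply hg1
            · intro y hy
              have h := hA (Finset.mem_of_mem_erase hy)
              rw [Finset.mem_insert] at h
              rcases h with h | h
              · exact absurd h (Finset.ne_of_mem_erase hy)
              · exact hT1 h
            · rw [Finset.card_erase_of_mem hxA]; omega
          · exact hg2 A ((Finset.subset_insert_iff_of_notMem hxA).1 hA) hc
        have hsub : S.erase x ⊆ S := Finset.erase_subset _ _
        have hins : ∀ T T1 : Finset ℕ, T ⊆ S.erase x → T1 ⊆ T → insert x T1 ⊆ S ∧
            (insert x T1).card = T1.card + 1 := by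
          intro T T1 hT hT1
          refine ⟨Finset.insert_subset hx ((hT1.trans hT).trans hsub), ?_⟩
          apply Finset.card_insert_of_notMem
          intro h
          exact Finset.notMem_erase x S (hT (hT1 h))
        rcases hN (S.erase x) hcard (fun A => f (insert x A)) with
          ⟨T, hT, hTc, hTf⟩ | ⟨T, hT, hTc, hTf⟩
        · rcases h1 T hTc.ge f with ⟨T1, hT1, hc1, hf1⟩ | ⟨T1, hT1, hc1, hf1⟩
          · obtain ⟨ha, hb⟩ := hins T T1 hT hT1
            exact Or.inl ⟨insert x T1, ha, by omega, key f T T1 hT hT1 hTf hf1⟩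
          · exact Or.inr ⟨T1, (hT1.trans hT).trans hsub, hc1, hf1⟩
        · rcases h2 T hTc.ge f with ⟨T1, hT1, hc1, hf1⟩ | ⟨T1, hT1, hc1, hf1⟩
          · exact Or.inl ⟨T1, (hT1.trans hT).trans hsub, hc1, hf1⟩
          · obtain ⟨ha, hb⟩ := hins T T1 hT hT1
            exact Or.inr ⟨insert x T1, ha, by omega,
              key (fun A => ¬ f A) T T1 hT hT1 hTf hf1⟩

/-! ### Chains of bad intervals and partitions into good intervals -/

/-- There are `N` consecutive bad intervals in `[u, v]`. -/
def ScChain (B : ℝ → ℝ → Prop) : ℕ → ℝ → ℝ → Prop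
  | 0, _, _ => True
  | N + 1, u, v => ∃ w, u ≤ w ∧ w ≤ v ∧ B u w ∧ ScChain B N w v

/-- `[u, v]` can be partitioned into `k` intervals with property `G`. -/
def ScPart (G : ℝ → ℝ → Prop) : ℕ → ℝ → ℝ → Prop
  | 0, u, v => u = v
  | k + 1, u, v => ∃ w, u ≤ w ∧ w ≤ v ∧ G u w ∧ ScPart G k w v

theorem sc_part_of_not_chain (B : ℝ → ℝ → Prop)
    (hmono : ∀ u w u' w', B u w → u' ≤ u → w ≤ w' → B u' w')
    (hopen : ∀ u w, B u w → ∃ u' w', u < u' ∧ u' < w' ∧ w' < w ∧ B u' w') (N : ℕ) :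
    ∀ u v, u ≤ v → ¬ ScChain B N u v → ∃ k ≤ N, ScPart (fun x y => ¬ B x y) k u v := by
  induction N with
  | zero => intro u v _ h; exact absurd trivial h
  | succ N ih =>
    intro u v huv h
    set A : Set ℝ := {w | u ≤ w ∧ w ≤ v ∧ ¬ B u w} with hA
    have huu : ¬ B u u := by
      intro hB
      obtain ⟨u', w', h1, h2, h3, -⟩ := hopen _ _ hB
      linarith
    have huA : u ∈ A := ⟨le_rfl, huv, huu⟩
    have hbdd : BddAbove A := ⟨v, fun w hw => hw.2.1⟩
    set c := sSup A with hc
    have huc : u ≤ c := le_csSup hbdd huA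
    have hcv : c ≤ v := csSup_le ⟨u, huA⟩ fun w hw => hw.2.1
    have hgood : ¬ B u c := by
      intro hB
      obtain ⟨u', w', h1, h2, h3, h4⟩ := hopen _ _ hB
      obtain ⟨w, hw, hlt⟩ := exists_lt_of_lt_csSup ⟨u, huA⟩ h3
      exact hw.2.2 (hmono _ _ _ _ h4 h1.le hlt.le)
    have hbad : ∀ w, c < w → w ≤ v → B u w := by
      intro w h1 h2
      by_contra hB
      exact absurd (le_csSup hbdd (show w ∈ A from ⟨by linarith, h2, hB⟩)) (not_le.2 h1)
    rcases hcv.eq_or_lt with hcv' | hcv'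
    · exact ⟨1, by omega, v, huv, le_rfl, hcv' ▸ hgood, rfl⟩
    · have hnc : ¬ ScChain B N c v := by
        intro hch
        apply h
        cases N with
        | zero => exact ⟨v, huv, le_rfl, hbad v hcv' le_rfl, trivial⟩
        | succ N =>
          obtain ⟨w, hw1, hw2, hw3, hw4⟩ := hch
          obtain ⟨u', w', h1, h2, h3, h4⟩ := hopen _ _ hw3
          exact ⟨u', by linarith, by linarith, hbad u' h1 (by linarith), w, by linarith, hw2,
            hmono _ _ _ _ h4 le_rfl h3.le, hw4⟩
      obtain ⟨k, hk, hp⟩ := ih c v hcv hnc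
      exact ⟨k + 1, by omega, c, huc, hcv, hgood, hp⟩

theorem sc_chain_seq (B : ℝ → ℝ → Prop) (N : ℕ) :
    ∀ u v, u ≤ v → ScChain B N u v → ∃ p : ℕ → ℝ, p 0 = u ∧ p N ≤ v ∧
      ∀ i < N, B (p i) (p (i + 1)) := by
  induction N with
  | zero => intro u v huv _; exact ⟨fun _ => u, rfl, huv, by simp⟩
  | succ N ih =>
    rintro u v huv ⟨w, h1, h2, h3, h4⟩
    obtain ⟨p, hp0, hpN, hp⟩ := ih w v h2 h4
    refine ⟨fun i => Nat.casesOn i u p, rfl, hpN, ?_⟩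
    intro i hi
    cases i with
    | zero => simpa [hp0] using h3
    | succ i => exact hp i (by omega)

theorem sc_part_double (G H : ℝ → ℝ → Prop) (a b : ℝ)
    (hGH : ∀ u v, a ≤ u → u ≤ v → v ≤ b → G u v → ∃ m, u ≤ m ∧ m ≤ v ∧ H u m ∧ H m v) (k : ℕ) :
    ∀ u v, a ≤ u → v ≤ b → ScPart G k u v → ScPart H (2 * k) u v := by
  induction k with
  | zero => intro u v _ _ h; exact h
  | succ k ih =>
    rintro u v hu hv ⟨w, h1, h2, h3, h4⟩
    obtain ⟨m, hm1, hm2, hm3, hm4⟩ := hGH u w hu h1 (h2.trans hv) h3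
    exact ⟨m, hm1, hm2.trans h2, hm3, w, hm2, h2, hm4, ih w v (hu.trans h1) hv h4⟩

theorem sc_part_tuple (H : ℝ → ℝ → Prop) (k : ℕ) :
    ∀ u v, u ≤ v → ScPart H k u v → ∃ t : Fin (k + 1) → ℝ,
      t 0 = u ∧ t (Fin.last k) = v ∧ Monotone t ∧ ∀ j : Fin k, H (t j.castSucc) (t j.succ) := by
  induction k with
  | zero =>
    intro u v _ h
    exact ⟨fun _ => u, rfl, h, monotone_const, fun j => j.elim0⟩
  | succ k ih =>
    rintro u v huv ⟨w, h1, h2, h3, h4⟩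
    obtain ⟨t, ht0, htl, htm, ht⟩ := ih w v h2 h4
    refine ⟨Fin.cons u t, rfl, ?_, ?_, ?_⟩
    · rw [← Fin.succ_last, Fin.cons_succ, htl]
    · rw [Fin.monotone_iff_le_succ]
      intro i
      refine Fin.cases ?_ (fun j => ?_) i
      · simp [ht0, h1]
      · rw [← Fin.succ_castSucc, Fin.cons_succ, Fin.cons_succ]
        exact htm (Fin.castSucc_le_succ j)
    · intro i
      refine Fin.cases ?_ (fun j => ?_) i
      · simpa [ht0] using h3
      · rw [← Fin.succ_castSucc, Fin.cons_succ, Fin.cons_succ]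
        exact ht j

/-! ### Linear algebra along the lifted curve -/

/-- The symmetrized orientation of a tuple of parameters. -/
noncomputable def scW {d : ℕ} (F : ℝ → (Fin (d + 1) → ℝ)) (t : Fin (d + 1) → ℝ) : ℝ :=
  Matrix.det (Matrix.of fun i => F (t i)) * Matrix.det (Matrix.vandermonde t)

/-- The orientation of a finite set of parameters. -/
noncomputable def scWs {d : ℕ} (F : ℝ → (Fin (d + 1) → ℝ)) (S : Finset ℝ) : ℝ :=
  if h : S.card = d + 1 then scW F (S.orderEmbOfFin h) else 0

/-- The functional vanishing at `F (e i)`. -/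
noncomputable def scPhi {d : ℕ} (F : ℝ → (Fin (d + 1) → ℝ)) (e : Fin d → ℝ) :
    (Fin (d + 1) → ℝ) →ₗ[ℝ] ℝ where
  toFun v := (Matrix.detRowAlternating (R := ℝ) (n := Fin (d + 1))).curryLeft v (fun i => F (e i))
  map_add' x y := by simp
  map_smul' c x := by simp

/-- Every nonzero functional has at most `d + 1` zeros along `F` on `[a, b]`. -/
def ScZ {d : ℕ} (F : ℝ → (Fin (d + 1) → ℝ)) (a b : ℝ) : Prop :=
  ∀ φ : (Fin (d + 1) → ℝ) →ₗ[ℝ] ℝ, φ ≠ 0 →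
    {s | s ∈ Icc a b ∧ φ (F s) = 0}.encard ≤ ((d + 1 : ℕ) : ℕ∞)

theorem scPhi_apply {d : ℕ} (F : ℝ → (Fin (d + 1) → ℝ)) (e : Fin d → ℝ) (s : ℝ) :
    scPhi F e (F s) =
      Matrix.det (Matrix.of fun i => F ((Fin.cons s e : Fin (d + 1) → ℝ) i)) := by
  show (Matrix.detRowAlternating (R := ℝ) (n := Fin (d + 1))).curryLeft (F s)
    (fun i => F (e i)) = _
  rw [AlternatingMap.curryLeft_apply_apply]
  show Matrix.det _ = Matrix.det _
  congr 1
  ext i j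
  refine Fin.cases ?_ (fun i => ?_) i <;> simp

theorem scPhi_zero {d : ℕ} (F : ℝ → (Fin (d + 1) → ℝ)) (e : Fin d → ℝ) (i : Fin d) :
    scPhi F e (F (e i)) = 0 := by
  rw [scPhi_apply]
  apply Matrix.det_zero_of_row_eq (i := 0) (j := i.succ) (Fin.succ_ne_zero i).symm
  ext j
  simp

theorem scW_cons {d : ℕ} (F : ℝ → (Fin (d + 1) → ℝ)) (e : Fin d → ℝ) (s : ℝ) :
    scW F (Fin.cons s e : Fin (d + 1) → ℝ) =
      scPhi F e (F s) * (∏ i, (e i - s)) * Matrix.det (Matrix.vandermonde e) := by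
  rw [scW, ← scPhi_apply, mul_assoc]
  congr 1
  rw [Matrix.det_vandermonde, Matrix.det_vandermonde, Fin.prod_univ_succ]
  congr 1
  · rw [Fin.prod_Ioi_zero]; simp
  · refine Finset.prod_congr rfl fun i _ => ?_
    rw [Fin.prod_Ioi_succ]; simp

theorem scW_perm {d : ℕ} (F : ℝ → (Fin (d + 1) → ℝ)) (t : Fin (d + 1) → ℝ)
    (σ : Equiv.Perm (Fin (d + 1))) : scW F (t ∘ σ) = scW F t := by
  have h1 := Matrix.det_permute σ (Matrix.of fun i => F (t i))
  have h2 := Matrix.det_permute σ (Matrix.vandermonde t)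
  have h3 : ((Equiv.Perm.sign σ : ℤ) : ℝ) * ((Equiv.Perm.sign σ : ℤ) : ℝ) = 1 := by
    rcases Int.units_eq_one_or (Equiv.Perm.sign σ) with h | h <;> simp [h]
  have e1 : (Matrix.of fun i => F ((t ∘ σ) i)) = (Matrix.of fun i => F (t i)).submatrix σ id := by
    ext i j; simp
  have e2 : Matrix.vandermonde (t ∘ σ) = (Matrix.vandermonde t).submatrix σ id := by
    ext i j; simp [Matrix.vandermonde]
  rw [scW, e1, e2, h1, h2, scW]
  linear_combination ((Matrix.of fun i => F (t i)).det * (Matrix.vandermonde t).det) * h3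

theorem scWs_eq {d : ℕ} (F : ℝ → (Fin (d + 1) → ℝ)) (t : Fin (d + 1) → ℝ)
    (ht : Function.Injective t) (S : Finset ℝ) (hS : Finset.univ.image t = S) :
    scWs F S = scW F t := by
  have hc : S.card = d + 1 := by
    rw [← hS, Finset.card_image_of_injective _ ht]; simp
  rw [scWs, dif_pos hc]
  have hmem : ∀ i, t i ∈ S := fun i => hS ▸ Finset.mem_image_of_mem _ (Finset.mem_univ _)
  set g : Fin (d + 1) → Fin (d + 1) := fun i => (S.orderIsoOfFin hc).symm ⟨t i, hmem i⟩ with hg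
  have hgi : Function.Injective g := by
    intro i j hij
    have := (S.orderIsoOfFin hc).symm.injective hij
    exact ht (Subtype.ext_iff.1 this)
  let σ : Equiv.Perm (Fin (d + 1)) := Equiv.ofBijective g (Finite.injective_iff_bijective.1 hgi)
  have : t = (S.orderEmbOfFin hc) ∘ σ := by
    funext i
    show t i = S.orderEmbOfFin hc (g i)
    rw [← Finset.coe_orderIsoOfFin_apply, hg]
    simp
  conv_rhs => rw [this]
  rw [scW_perm]

theorem scWs_insert {d : ℕ} (F : ℝ → (Fin (d + 1) → ℝ)) (E : Finset ℝ) (hE : E.card = d) (s : ℝ)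
    (hs : s ∉ E) :
    scWs F (insert s E) = scPhi F (E.orderEmbOfFin hE) (F s) * (∏ e ∈ E, (e - s)) *
      Matrix.det (Matrix.vandermonde (E.orderEmbOfFin hE)) := by
  have himg : Finset.univ.image (E.orderEmbOfFin hE) = E := by
    apply Finset.coe_injective
    simp
  have hprod : (∏ e ∈ E, (e - s)) = ∏ i, (E.orderEmbOfFin hE i - s) := by
    conv_lhs => rw [← himg]
    rw [Finset.prod_image (fun i _ j _ h => (E.orderEmbOfFin hE).injective h)]
  rw [hprod, ← scW_cons]
  apply scWs_eq
  · rw [Fin.cons_injective_iff]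
    refine ⟨?_, (E.orderEmbOfFin hE).injective⟩
    rintro ⟨i, hi⟩
    exact hs (hi ▸ Finset.orderEmbOfFin_mem E hE i)
  · ext x
    simp only [Finset.mem_image, Finset.mem_univ, true_and, Finset.mem_insert, Fin.exists_fin_succ,
      Fin.cons_zero, Fin.cons_succ]
    have hm : x ∈ E ↔ ∃ i, E.orderEmbOfFin hE i = x := by
      rw [← Finset.mem_coe, ← Finset.range_orderEmbOfFin E hE]
      exact Iff.rfl
    rw [hm, eq_comm]

theorem scWs_ne_zero {d : ℕ} (F : ℝ → (Fin (d + 1) → ℝ)) (S : Finset ℝ) (hS : S.card = d + 1)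
    (hF : LinearIndepOn ℝ F (S : Set ℝ)) : scWs F S ≠ 0 := by
  rw [scWs, dif_pos hS, scW]
  apply mul_ne_zero
  · have : LinearIndependent ℝ (Matrix.of fun i => F (S.orderEmbOfFin hS i)).row := by
      exact LinearIndependent.comp hF (S.orderIsoOfFin hS) (S.orderIsoOfFin hS).injective
    rw [Matrix.linearIndependent_rows_iff_isUnit, Matrix.isUnit_iff_isUnit_det] at this
    exact this.ne_zero
  · rw [Matrix.det_vandermonde_ne_zero_iff]
    exact (S.orderEmbOfFin hS).injective

/-- Interpolation on an independent set. -/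
theorem sc_interp {d : ℕ} (F : ℝ → (Fin (d + 1) → ℝ)) (E : Finset ℝ)
    (hF : LinearIndepOn ℝ F (E : Set ℝ)) (g : ℝ → ℝ) :
    ∃ ψ : (Fin (d + 1) → ℝ) →ₗ[ℝ] ℝ, ∀ e ∈ E, ψ (F e) = g e := by
  have hF' : LinearIndependent ℝ (fun x : (E : Set ℝ) => F x) := hF
  let B := Module.Basis.span hF'
  obtain ⟨ψ, hψ⟩ := LinearMap.exists_extend (B.constr ℝ (fun x : (E : Set ℝ) => g x))
  refine ⟨ψ, fun e he => ?_⟩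
  have h1 : (B.constr ℝ (fun x : (E : Set ℝ) => g x)) (B ⟨e, he⟩) = g e := by
    rw [Module.Basis.constr_basis]
  rw [← hψ] at h1
  have h2 : ((B ⟨e, he⟩ : _) : Fin (d + 1) → ℝ) = F e :=
    congrArg Subtype.val (Module.Basis.span_apply hF' ⟨e, he⟩)
  rw [← h1, ← h2]
  rfl

/-- A functional cannot strictly alternate on `d + 3` points. -/
theorem sc_no_alternation {d : ℕ} (F : ℝ → (Fin (d + 1) → ℝ)) (hcont : Continuous F) (a b : ℝ)
    (hz : ScZ F a b) (φ : (Fin (d + 1) → ℝ) →ₗ[ℝ] ℝ) (S : Finset ℝ) (hS : S.card = d + 3)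
    (hab : ∀ s ∈ S, s ∈ Icc a b) (σ : ℝ)
    (halt : ∀ s ∈ S, 0 < σ * (φ (F s) * ∏ u ∈ S.erase s, (s - u))) : False := by
  set x := S.orderEmbOfFin hS with hx
  have hmem : ∀ i, x i ∈ S := fun i => Finset.orderEmbOfFin_mem S hS i
  have hcφ : Continuous fun s => φ (F s) := (LinearMap.continuous_of_finiteDimensional φ).comp hcont
  have hsign : ∀ k : Fin (d + 2), φ (F (x k.castSucc)) * φ (F (x k.succ)) < 0 := by
    intro k
    have hlt : x k.castSucc < x k.succ := x.strictMono Fin.castSucc_lt_succ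
    set s := x k.castSucc with hs
    set s' := x k.succ with hs'
    have hsS : s ∈ S := hmem _
    have hsS' : s' ∈ S := hmem _
    have h1 := halt s hsS
    have h2 := halt s' hsS'
    have e1 : ∏ u ∈ S.erase s, (s - u) = (s - s') * ∏ u ∈ (S.erase s).erase s', (s - u) :=
      (Finset.mul_prod_erase _ _ (Finset.mem_erase.2 ⟨hlt.ne', hsS'⟩)).symm
    have e2 : ∏ u ∈ S.erase s', (s' - u) = (s' - s) * ∏ u ∈ (S.erase s).erase s', (s' - u) := by
      rw [Finset.erase_right_comm]
      exact (Finset.mul_prod_erase _ _ (Finset.mem_erase.2 ⟨hlt.ne, hsS⟩)).symm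
    have e3 : 0 < (∏ u ∈ (S.erase s).erase s', (s - u)) *
        ∏ u ∈ (S.erase s).erase s', (s' - u) := by
      rw [← Finset.prod_mul_distrib]
      apply Finset.prod_pos
      intro u hu
      rw [Finset.mem_erase, Finset.mem_erase] at hu
      obtain ⟨hu1, hu2, hu3⟩ := hu
      have hur : u ∈ Set.range x := by rw [hx, Finset.range_orderEmbOfFin]; exact hu3
      obtain ⟨l, rfl⟩ := hur
      rcases lt_or_ge l k.castSucc with hl | hl
      · have := x.strictMono hl
        exact mul_pos (by linarith) (by linarith)
      · have hl' : k.succ ≤ l := by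
          have : l ≠ k.castSucc := fun h => hu2 (by rw [h])
          exact Fin.castSucc_lt_iff_succ_le.1 (lt_of_le_of_ne hl this.symm)
        have := x.monotone hl'
        have h4 : s' < x l := lt_of_le_of_ne this (Ne.symm hu1)
        exact mul_pos_of_neg_of_neg (by linarith) (by linarith)
    rw [e1] at h1
    rw [e2] at h2
    have h3 := mul_pos h1 h2
    by_contra hcon
    push Not at hcon
    have h5 : 0 ≤ (σ ^ 2 * (s' - s) ^ 2 * ((∏ u ∈ (S.erase s).erase s', (s - u)) *
        ∏ u ∈ (S.erase s).erase s', (s' - u))) * (φ (F s) * φ (F s')) :=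
      mul_nonneg (mul_nonneg (by positivity) e3.le) hcon
    nlinarith [h3, h5]
  have hφ : φ ≠ 0 := by
    rintro rfl
    have := hsign 0
    simp at this
  have hzero : ∀ k : Fin (d + 2), ∃ z, x k.castSucc < z ∧ z < x k.succ ∧ φ (F z) = 0 := by
    intro k
    have hlt : x k.castSucc < x k.succ := x.strictMono Fin.castSucc_lt_succ
    rcases mul_neg_iff.1 (hsign k) with ⟨h1, h2⟩ | ⟨h1, h2⟩
    · obtain ⟨z, hz1, hz2⟩ := intermediate_value_Ioo' hlt.le hcφ.continuousOn ⟨h2, h1⟩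
      exact ⟨z, hz1.1, hz1.2, hz2⟩
    · obtain ⟨z, hz1, hz2⟩ := intermediate_value_Ioo hlt.le hcφ.continuousOn ⟨h1, h2⟩
      exact ⟨z, hz1.1, hz1.2, hz2⟩
  choose z hz1 hz2 hz3 using hzero
  have hzm : StrictMono z := by
    intro k l hkl
    have : k.succ ≤ l.castSucc := by
      rw [Fin.le_def]; simp; exact hkl
    exact (hz2 k).trans_le ((x.monotone this).trans (hz1 l).le)
  have hsub : Set.range z ⊆ {s | s ∈ Icc a b ∧ φ (F s) = 0} := by
    rintro _ ⟨k, rfl⟩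
    exact ⟨⟨(hab _ (hmem _)).1.trans (hz1 k).le, (hz2 k).le.trans (hab _ (hmem _)).2⟩, hz3 k⟩
  have h1 := (Set.encard_le_encard hsub).trans (hz φ hφ)
  rw [← Set.image_univ, hzm.injective.encard_image, Set.encard_univ] at h1
  simp at h1

/-- The flip property. -/
theorem sc_flip {d : ℕ} (F : ℝ → (Fin (d + 1) → ℝ)) (hcont : Continuous F) (a b : ℝ)
    (hz : ScZ F a b) (E : Finset ℝ) (hE : E.card = d) (hEab : ∀ s ∈ E, s ∈ Icc a b)
    (hF : LinearIndepOn ℝ F (E : Set ℝ)) (i j l : ℝ) (hij : i < j) (hjl : j < l)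
    (hi : i ∉ E) (hj : j ∉ E) (hl : l ∉ E) (hia : i ∈ Icc a b) (hla : l ∈ Icc a b) (σ : ℝ)
    (h1 : 0 < σ * scWs F (insert i E)) (h2 : σ * scWs F (insert j E) < 0)
    (h3 : 0 < σ * scWs F (insert l E)) : False := by
  rw [scWs_insert F E hE i hi] at h1
  rw [scWs_insert F E hE j hj] at h2
  rw [scWs_insert F E hE l hl] at h3
  set φ := scPhi F (E.orderEmbOfFin hE) with hφ
  have hφ0 : ∀ e ∈ E, φ (F e) = 0 := by
    intro e he
    have : e ∈ Set.range (E.orderEmbOfFin hE) := by rw [Finset.range_orderEmbOfFin]; exact he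
    obtain ⟨k, rfl⟩ := this
    exact scPhi_zero F _ k
  set V := Matrix.det (Matrix.vandermonde (E.orderEmbOfFin hE)) with hV
  -- sign of products
  set τ : ℝ := σ * V * (-1) ^ d with hτ
  have hneg : ∀ s : ℝ, ∏ e ∈ E, (e - s) = (-1) ^ d * ∏ e ∈ E, (s - e) := by
    intro s
    rw [← hE, ← Finset.prod_const, ← Finset.prod_mul_distrib]
    exact Finset.prod_congr rfl fun e _ => by ring
  have g1 : 0 < τ * (φ (F i) * ∏ e ∈ E, (i - e)) := by
    rw [hneg] at h1; rw [hτ]; linarith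
  have g2 : τ * (φ (F j) * ∏ e ∈ E, (j - e)) < 0 := by
    rw [hneg] at h2; rw [hτ]; linarith
  have g3 : 0 < τ * (φ (F l) * ∏ e ∈ E, (l - e)) := by
    rw [hneg] at h3; rw [hτ]; linarith
  have hτ0 : τ ≠ 0 := by rintro h; rw [h] at g1; simp at g1
  set S : Finset ℝ := insert i (insert j (insert l E)) with hS
  have hlE : l ∉ E := hl
  have hjE : j ∉ insert l E := by simp [hjl.ne, hj]
  have hiE : i ∉ insert j (insert l E) := by simp [hij.ne, (hij.trans hjl).ne, hi]
  have hcard : S.card = d + 3 := by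
    rw [hS, Finset.card_insert_of_notMem hiE, Finset.card_insert_of_notMem hjE,
      Finset.card_insert_of_notMem hlE, hE]
  have p1 : ∏ u ∈ S.erase i, (i - u) = (i - j) * ((i - l) * ∏ e ∈ E, (i - e)) := by
    rw [hS, Finset.erase_insert hiE, Finset.prod_insert hjE, Finset.prod_insert hlE]
  have p2 : ∏ u ∈ S.erase j, (j - u) = (j - i) * ((j - l) * ∏ e ∈ E, (j - e)) := by
    have hh : i ∉ insert l E := by simp [(hij.trans hjl).ne, hi]
    rw [hS, Finset.insert_comm, Finset.erase_insert (by simp [hij.ne', hjl.ne, hj]),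
      Finset.prod_insert hh, Finset.prod_insert hlE]
  have p3 : ∏ u ∈ S.erase l, (l - u) = (l - i) * ((l - j) * ∏ e ∈ E, (l - e)) := by
    have hh : j ∉ E := hj
    have hh' : i ∉ insert j E := by simp [hij.ne, hi]
    have : S = insert l (insert i (insert j E)) := by
      rw [hS]; ext x; simp only [Finset.mem_insert]; tauto
    rw [this, Finset.erase_insert (by simp [hjl.ne', (hij.trans hjl).ne', hl]),
      Finset.prod_insert hh', Finset.prod_insert hh]
  obtain ⟨ψ, hψ⟩ := sc_interp F E hF (fun e => τ * ∏ u ∈ S.erase e, (e - u))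
  have hcont' : ∀ s : ℝ, Filter.Tendsto (fun ε : ℝ => τ * ((φ + ε • ψ) (F s) *
      ∏ u ∈ S.erase s, (s - u))) (nhdsWithin 0 (Ioi 0))
      (nhds (τ * (φ (F s) * ∏ u ∈ S.erase s, (s - u)))) := by
    intro s
    have : Continuous fun ε : ℝ => τ * ((φ + ε • ψ) (F s) * ∏ u ∈ S.erase s, (s - u)) := by
      simp only [LinearMap.add_apply, LinearMap.smul_apply, smul_eq_mul]
      fun_prop
    have h := (this.tendsto 0).mono_left (nhdsWithin_le_nhds (s := Ioi 0))
    simpa using h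
  have q1 : 0 < τ * (φ (F i) * ∏ u ∈ S.erase i, (i - u)) := by
    rw [p1]
    have := mul_pos g1 (mul_pos (sub_pos.2 hij) (sub_pos.2 (hij.trans hjl)))
    linarith
  have q2 : 0 < τ * (φ (F j) * ∏ u ∈ S.erase j, (j - u)) := by
    rw [p2]
    have := mul_pos (neg_pos.2 g2) (mul_pos (sub_pos.2 hij) (sub_pos.2 hjl))
    linarith
  have q3 : 0 < τ * (φ (F l) * ∏ u ∈ S.erase l, (l - u)) := by
    rw [p3]
    have := mul_pos g3 (mul_pos (sub_pos.2 (hij.trans hjl)) (sub_pos.2 hjl))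
    linarith
  have ev := ((hcont' i).eventually_const_lt q1).and
    (((hcont' j).eventually_const_lt q2).and (((hcont' l).eventually_const_lt q3).and
      (self_mem_nhdsWithin (a := (0 : ℝ)) (s := Ioi 0))))
  obtain ⟨ε, e1, e2, e3, e4⟩ := ev.exists
  refine sc_no_alternation F hcont a b hz (φ + ε • ψ) S hcard ?_ τ ?_
  · intro s hs
    simp only [hS, Finset.mem_insert] at hs
    rcases hs with rfl | rfl | rfl | hs
    · exact hia
    · exact ⟨hia.1.trans hij.le, hjl.le.trans hla.2⟩
    · exact hla
    · exact hEab s hs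
  · intro s hs
    simp only [hS, Finset.mem_insert] at hs
    rcases hs with h | h | h | hs
    · rw [h]; exact e1
    · rw [h]; exact e2
    · rw [h]; exact e3
    · simp only [LinearMap.add_apply, LinearMap.smul_apply, smul_eq_mul]
      rw [hφ0 s hs, hψ s hs]
      have hne : ∏ u ∈ S.erase s, (s - u) ≠ 0 := by
        rw [Finset.prod_ne_zero_iff]
        intro u hu
        exact sub_ne_zero.2 (Finset.ne_of_mem_erase hu).symm
      have e4' : 0 < ε := e4
      have : 0 < ε * (τ * ∏ u ∈ S.erase s, (s - u)) ^ 2 :=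
        mul_pos e4' (sq_pos_of_ne_zero (mul_ne_zero hτ0 hne))
      nlinarith [this]

/-! ### General position -/

theorem sc_avoid {d : ℕ} (F : ℝ → (Fin (d + 1) → ℝ)) (a b : ℝ) (hz : ScZ F a b)
    (P : Finset (Finset ℝ)) (hP : ∀ Q ∈ P, Q.card < d + 1) (Z : Finset ℝ) (u v : ℝ) (huv : u < v)
    (hab : Ioo u v ⊆ Icc a b) :
    ∃ s ∈ Ioo u v, s ∉ Z ∧ ∀ Q ∈ P, F s ∉ Submodule.span ℝ (F '' (Q : Set ℝ)) := by
  have hfin : ∀ Q ∈ P,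
      {s | s ∈ Icc a b ∧ F s ∈ Submodule.span ℝ (F '' (Q : Set ℝ))}.Finite := by
    intro Q hQ
    have hlt : Submodule.span ℝ (F '' (Q : Set ℝ)) < ⊤ := by
      apply Submodule.lt_top_of_finrank_lt_finrank
      have h1 := finrank_span_finset_le_card (R := ℝ) (Q.image F)
      rw [Set.finrank, Finset.coe_image] at h1
      have h2 : (Q.image F).card ≤ Q.card := Finset.card_image_le
      have h3 := hP Q hQ
      rw [Module.finrank_fin_fun]
      omega
    obtain ⟨φ, hφ, hle⟩ := Submodule.exists_le_ker_of_lt_top _ hlt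
    have h1 : {s | s ∈ Icc a b ∧ φ (F s) = 0}.Finite := by
      apply Set.finite_of_encard_le_coe (hz φ hφ)
    exact h1.subset fun s hs => ⟨hs.1, hle hs.2⟩
  have hbad : ((Z : Set ℝ) ∪ ⋃ Q ∈ P,
      {s | s ∈ Icc a b ∧ F s ∈ Submodule.span ℝ (F '' (Q : Set ℝ))}).Finite :=
    (Z.finite_toSet).union (P.finite_toSet.biUnion hfin)
  obtain ⟨s, hs, hs'⟩ := ((Ioo_infinite huv).sdiff hbad).nonempty
  refine ⟨s, hs, fun h => hs' (Or.inl h), fun Q hQ h => hs' (Or.inr ?_)⟩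
  simp only [Set.mem_iUnion]
  exact ⟨Q, hQ, hab hs, h⟩

/-- General position of a finite set of parameters. -/
def ScGP {d : ℕ} (F : ℝ → (Fin (d + 1) → ℝ)) (P : Finset ℝ) : Prop :=
  ∀ Q ⊆ P, Q.card ≤ d + 1 → LinearIndepOn ℝ F (Q : Set ℝ)

theorem sc_gp_step {d : ℕ} (F : ℝ → (Fin (d + 1) → ℝ)) (a b : ℝ) (hz : ScZ F a b)
    (P : Finset ℝ) (hP : ScGP F P) (u v : ℝ) (huv : u < v) (hab : Ioo u v ⊆ Icc a b) :
    ∃ s ∈ Ioo u v, ScGP F (insert s P) := by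
  obtain ⟨s, hs, -, hs'⟩ := sc_avoid F a b hz (P.powerset.filter fun Q => Q.card < d + 1)
    (fun Q hQ => (Finset.mem_filter.1 hQ).2) ∅ u v huv hab
  refine ⟨s, hs, fun Q hQ hc => ?_⟩
  by_cases hsQ : s ∈ Q
  · have hsub : Q.erase s ⊆ P := by
      intro x hx
      have := hQ (Finset.mem_of_mem_erase hx)
      rw [Finset.mem_insert] at this
      exact this.resolve_left (Finset.ne_of_mem_erase hx)
    have hcard : (Q.erase s).card < d + 1 := by
      rw [Finset.card_erase_of_mem hsQ]
      have := Finset.card_pos.2 ⟨s, hsQ⟩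
      omega
    have h1 := hP _ hsub hcard.le
    have h2 := hs' (Q.erase s) (Finset.mem_filter.2 ⟨Finset.mem_powerset.2 hsub, hcard⟩)
    have h3 := h1.insert h2
    rwa [← Finset.coe_insert, Finset.insert_erase hsQ] at h3
  · exact hP Q ((Finset.subset_insert_iff_of_notMem hsQ).1 hQ) hc

theorem sc_gp_seq {d : ℕ} (F : ℝ → (Fin (d + 1) → ℝ)) (a b : ℝ) (hz : ScZ F a b)
    (P : Finset ℝ) (hP : ScGP F P) (u v : ℕ → ℝ) (k : ℕ)
    (h : ∀ i < k, u i < v i ∧ Ioo (u i) (v i) ⊆ Icc a b) :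
    ∃ x : ℕ → ℝ, (∀ i < k, x i ∈ Ioo (u i) (v i)) ∧
      ScGP F (P ∪ (Finset.range k).image x) := by
  induction k with
  | zero => exact ⟨fun _ => 0, by simp, by simpa using hP⟩
  | succ k ih =>
    obtain ⟨x, hx, hg⟩ := ih fun i hi => h i (by omega)
    obtain ⟨s, hs, hs'⟩ := sc_gp_step F a b hz _ hg (u k) (v k) (h k (by omega)).1
      (h k (by omega)).2
    refine ⟨Function.update x k s, ?_, ?_⟩
    · intro i hi
      rcases Nat.lt_succ_iff_lt_or_eq.1 hi with h1 | rfl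
      · rw [Function.update_of_ne h1.ne]; exact hx i h1
      · rw [Function.update_self]; exact hs
    · have : P ∪ (Finset.range (k + 1)).image (Function.update x k s) =
          insert s (P ∪ (Finset.range k).image x) := by
        rw [Finset.range_add_one, Finset.image_insert, Function.update_self, Finset.union_insert]
        congr 2
        apply Finset.image_congr
        intro i hi
        rw [Function.update_of_ne]
        have : i < k := by simpa using hi
        exact this.ne
      rw [this]
      exact hs'

theorem sc_extend {d : ℕ} (F : ℝ → (Fin (d + 1) → ℝ)) (a b : ℝ) (hz : ScZ F a b)
    (u v : ℝ) (huv : u < v) (hab : Icc u v ⊆ Icc a b) (z : ℝ) (P : Finset ℝ)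
    (hP : LinearIndepOn ℝ F (P : Set ℝ)) (hPu : ∀ x ∈ P, x ∈ Icc u v) (hzP : z ∉ P) (k : ℕ)
    (hk : P.card ≤ k) (hkd : k ≤ d + 1) :
    ∃ P' : Finset ℝ, P ⊆ P' ∧ P'.card = k ∧ (∀ x ∈ P', x ∈ Icc u v) ∧ z ∉ P' ∧
      LinearIndepOn ℝ F (P' : Set ℝ) := by
  induction k, hk using Nat.le_induction with
  | base => exact ⟨P, subset_rfl, rfl, hPu, hzP, hP⟩
  | succ k hk ih =>
    obtain ⟨P', h1, h2, h3, h4, h5⟩ := ih (by omega)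
    obtain ⟨s, hs, hs1, hs2⟩ := sc_avoid F a b hz {P'} (by simp; omega) (insert z P') u v huv
      (Ioo_subset_Icc_self.trans hab)
    have hs3 := hs2 P' (by simp)
    rw [Finset.mem_insert, not_or] at hs1
    refine ⟨insert s P', h1.trans (Finset.subset_insert _ _), ?_, ?_, ?_, ?_⟩
    · rw [Finset.card_insert_of_notMem hs1.2, h2]
    · intro x hx
      rcases Finset.mem_insert.1 hx with rfl | hx
      · exact Ioo_subset_Icc_self hs
      · exact h3 x hx
    · rw [Finset.mem_insert, not_or]
      exact ⟨fun h => hs1.1 h.symm, h4⟩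
    · rw [Finset.coe_insert]
      exact h5.insert hs3

theorem scW_continuous {d : ℕ} (F : ℝ → (Fin (d + 1) → ℝ)) (hcont : Continuous F) :
    Continuous (scW F) := by
  unfold scW
  apply Continuous.mul
  · apply Continuous.matrix_det
    refine continuous_matrix fun i j => ?_
    exact (continuous_apply j).comp (hcont.comp (continuous_apply i))
  · apply Continuous.matrix_det
    refine continuous_matrix fun i j => ?_
    simp only [Matrix.vandermonde_apply]
    fun_prop

/-- Both orientations occur in `(u, v)`. -/
def ScBad {d : ℕ} (F : ℝ → (Fin (d + 1) → ℝ)) (u v : ℝ) : Prop :=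
  (∃ t : Fin (d + 1) → ℝ, (∀ i, t i ∈ Ioo u v) ∧ 0 < scW F t) ∧
  (∃ t : Fin (d + 1) → ℝ, (∀ i, t i ∈ Ioo u v) ∧ scW F t < 0)

theorem scBad_mono {d : ℕ} (F : ℝ → (Fin (d + 1) → ℝ)) (u w u' w' : ℝ) (h : ScBad F u w)
    (hu : u' ≤ u) (hw : w ≤ w') : ScBad F u' w' := by
  obtain ⟨⟨t, ht, h1⟩, ⟨t', ht', h2⟩⟩ := h
  exact ⟨⟨t, fun i => Ioo_subset_Ioo hu hw (ht i), h1⟩,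
    ⟨t', fun i => Ioo_subset_Ioo hu hw (ht' i), h2⟩⟩

theorem scBad_lt {d : ℕ} (F : ℝ → (Fin (d + 1) → ℝ)) (u w : ℝ) (h : ScBad F u w) : u < w := by
  obtain ⟨⟨t, ht, h1⟩, -⟩ := h
  exact (ht 0).1.trans (ht 0).2

theorem scBad_open {d : ℕ} (F : ℝ → (Fin (d + 1) → ℝ)) (u w : ℝ) (h : ScBad F u w) :
    ∃ u' w', u < u' ∧ u' < w' ∧ w' < w ∧ ScBad F u' w' := by
  obtain ⟨⟨t, ht, h1⟩, ⟨t', ht', h2⟩⟩ := h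
  have key : ∀ x ∈ Ioo u w, ∀ᶠ δ in nhdsWithin (0 : ℝ) (Ioi 0), x ∈ Ioo (u + δ) (w - δ) := by
    intro x hx
    have hpos : 0 < min (x - u) (w - x) := lt_min (sub_pos.2 hx.1) (sub_pos.2 hx.2)
    filter_upwards [Ioo_mem_nhdsGT hpos] with δ hδ
    have a1 := hδ.2.trans_le (min_le_left _ _)
    have a2 := hδ.2.trans_le (min_le_right _ _)
    exact ⟨by linarith, by linarith⟩
  have e1 := Filter.eventually_all.2 fun i => key (t i) (ht i)
  have e2 := Filter.eventually_all.2 fun i => key (t' i) (ht' i)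
  obtain ⟨δ, d1, d2, d3⟩ := (e1.and (e2.and (self_mem_nhdsWithin (a := (0 : ℝ))
    (s := Ioi 0)))).exists
  have d3' : 0 < δ := d3
  exact ⟨u + δ, w - δ, by linarith, (d1 0).1.trans (d1 0).2, by linarith, ⟨t, d1, h1⟩,
    ⟨t', d2, h2⟩⟩

/-! ### Long chains of bad intervals do not exist -/

/-- The exchange argument. -/
theorem sc_exchange {d : ℕ} (F : ℝ → (Fin (d + 1) → ℝ)) (hcont : Continuous F) (a b : ℝ)
    (hz : ScZ F a b) (XL XR B : Finset ℝ) (y z : ℝ)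
    (hXL : ∀ x ∈ XL, x ∈ Icc a b ∧ x ≤ y) (hXR : ∀ x ∈ XR, x ∈ Icc a b ∧ z ≤ x)
    (hB : ∀ x ∈ B, y < x ∧ x < z)
    (hBab : ∀ x ∈ B, x ∈ Icc a b) (hLc : XL.card = d + 1) (hRc : XR.card = d + 1)
    (hgp : ScGP F ((XL ∪ XR) ∪ B)) (σ : ℝ) (hσ : σ ≠ 0)
    (hhom : ∀ Y ⊆ XL ∪ XR, Y.card = d + 1 → 0 < σ * scWs F Y) (k : ℕ) :
    ∀ C ⊆ B, C.card = k → ∀ Y ⊆ XL ∪ XR, Y.card + k = d + 1 → 0 < σ * scWs F (C ∪ Y) := by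
  have hdisj : ∀ x ∈ XL ∪ XR, x ∉ B := by
    intro x hx hxB
    have := hB x hxB
    rcases Finset.mem_union.1 hx with h | h
    · have := (hXL x h).2; linarith
    · have := (hXR x h).2; linarith
  induction k with
  | zero =>
    intro C _ hC Y hY hYc
    rw [Finset.card_eq_zero] at hC
    rw [hC, Finset.empty_union]
    exact hhom Y hY hYc
  | succ k ih =>
    intro C hCB hC Y hY hYc
    obtain ⟨c, hc⟩ : C.Nonempty := Finset.card_pos.1 (by omega)
    have hC'B : C.erase c ⊆ B := (Finset.erase_subset _ _).trans hCB
    have hC'c : (C.erase c).card = k := by rw [Finset.card_erase_of_mem hc]; omega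
    have hCY : ∀ D ⊆ B, Disjoint D Y := by
      intro D hD
      rw [Finset.disjoint_left]
      intro x hx hxY
      exact hdisj x (hY hxY) (hD hx)
    set E := C.erase c ∪ Y with hE
    have hEc : E.card = d := by
      rw [hE, Finset.card_union_of_disjoint (hCY _ hC'B), hC'c]; omega
    have hEsub : E ⊆ (XL ∪ XR) ∪ B :=
      Finset.union_subset (hC'B.trans Finset.subset_union_right)
        (hY.trans Finset.subset_union_left)
    obtain ⟨i, hiL, hiY⟩ := Finset.exists_mem_notMem_of_card_lt_card
      (show Y.card < XL.card by omega)
    obtain ⟨l, hlR, hlY⟩ := Finset.exists_mem_notMem_of_card_lt_card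
      (show Y.card < XR.card by omega)
    have hcB := hB c (hCB hc)
    have hic : i < c := (hXL i hiL).2.trans_lt hcB.1
    have hcl : c < l := hcB.2.trans_le (hXR l hlR).2
    have hiX : i ∈ XL ∪ XR := Finset.mem_union_left _ hiL
    have hlX : l ∈ XL ∪ XR := Finset.mem_union_right _ hlR
    have hnE : ∀ x ∈ XL ∪ XR, x ∉ Y → x ∉ E := by
      intro x hx hxY h
      rcases Finset.mem_union.1 h with h | h
      · exact hdisj x hx (hC'B h)
      · exact hxY h
    have hcE : c ∉ E := by
      intro h
      rcases Finset.mem_union.1 h with h | h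
      · exact Finset.notMem_erase _ _ h
      · exact hdisj c (hY h) (hCB hc)
    have hins : ∀ x ∈ XL ∪ XR, x ∉ Y → 0 < σ * scWs F (insert x E) := by
      intro x hx hxY
      rw [hE, ← Finset.union_insert]
      apply ih _ hC'B hC'c _ (Finset.insert_subset hx hY)
      rw [Finset.card_insert_of_notMem hxY]; omega
    have hCE : insert c E = C ∪ Y := by
      rw [hE, ← Finset.insert_union, Finset.insert_erase hc]
    have hne : scWs F (C ∪ Y) ≠ 0 := by
      have hcard : (C ∪ Y).card = d + 1 := by
        rw [← hCE, Finset.card_insert_of_notMem hcE, hEc]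
      apply scWs_ne_zero F _ hcard
      apply hgp _ _ hcard.le
      exact Finset.union_subset (hCB.trans Finset.subset_union_right)
        (hY.trans Finset.subset_union_left)
    by_contra hcon
    have hneg : σ * scWs F (C ∪ Y) < 0 :=
      lt_of_le_of_ne (not_lt.1 hcon) (mul_ne_zero hσ hne)
    rw [← hCE] at hneg
    refine sc_flip F hcont a b hz E hEc ?_ (hgp E hEsub (by omega)) i c l hic hcl
      (hnE i hiX hiY) hcE (hnE l hlX hlY) (hXL i hiL).1 (hXR l hlR).1 σ (hins i hiX hiY) hneg
      (hins l hlX hlY)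
    intro s hs
    rcases Finset.mem_union.1 (hEsub hs) with h | h
    · rcases Finset.mem_union.1 h with h | h
      · exact (hXL s h).1
      · exact (hXR s h).1
    · exact hBab s h

theorem sc_no_chain (d : ℕ) : ∃ N : ℕ, ∀ (F : ℝ → (Fin (d + 1) → ℝ)), Continuous F →
    ∀ a b : ℝ, a ≤ b → ScZ F a b → ¬ ScChain (ScBad F) N a b := by
  obtain ⟨N, hN⟩ := sc_ramsey (d + 1) (2 * (d + 1) + 1) (2 * (d + 1) + 1)
  refine ⟨N, fun F hcont a b hab hz hch => ?_⟩
  obtain ⟨p, hp0, hpN, hp⟩ := sc_chain_seq _ N a b hab hch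
  have hpm : ∀ i j, i ≤ j → j ≤ N → p i ≤ p j := by
    intro i j hij
    induction j, hij using Nat.le_induction with
    | base => intro _; exact le_rfl
    | succ j hij ih =>
      intro hj
      exact (ih (by omega)).trans (scBad_lt F _ _ (hp j (by omega))).le
  have hIoo : ∀ i < N, Ioo (p i) (p (i + 1)) ⊆ Icc a b := by
    intro i hi s hs
    have h1 := hpm 0 i (by omega) (by omega)
    have h2 := hpm (i + 1) N (by omega) le_rfl
    rw [hp0] at h1
    exact ⟨by linarith [hs.1], by linarith [hs.2]⟩
  have hgp0 : ScGP F ∅ := by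
    intro Q hQ _
    rw [Finset.subset_empty] at hQ
    rw [hQ, Finset.coe_empty]
    exact linearIndepOn_empty ℝ F
  obtain ⟨x, hx, hgx⟩ := sc_gp_seq F a b hz ∅ hgp0 p (fun i => p (i + 1)) N
    (fun i hi => ⟨scBad_lt F _ _ (hp i hi), hIoo i hi⟩)
  rw [Finset.empty_union] at hgx
  have hxm : ∀ i j, i < j → j < N → x i < x j := by
    intro i j hij hj
    have h1 := (hx i (by omega)).2
    have h2 := (hx j hj).1
    have h3 := hpm (i + 1) j (by omega) (by omega)
    linarith
  have hxinj : Set.InjOn x (Finset.range N : Set ℕ) := by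
    intro i hi j hj hij
    have hi' : i < N := by simpa using hi
    have hj' : j < N := by simpa using hj
    rcases lt_trichotomy i j with h | h | h
    · exact absurd hij (hxm i j h hj').ne
    · exact h
    · exact absurd hij (hxm j i h hi').ne'
  obtain ⟨T, σ, hTN, hTc, hσ, hhom⟩ : ∃ (T : Finset ℕ) (σ : ℝ), T ⊆ Finset.range N ∧
      T.card = 2 * (d + 1) + 1 ∧ (σ = 1 ∨ σ = -1) ∧
      ∀ A ⊆ T, A.card = d + 1 → 0 < σ * scWs F (A.image x) := by
    rcases hN (Finset.range N) (by simp) (fun A => 0 < scWs F (A.image x)) with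
      ⟨T, h1, h2, h3⟩ | ⟨T, h1, h2, h3⟩
    · exact ⟨T, 1, h1, h2, Or.inl rfl, fun A hA hc => by simpa using h3 A hA hc⟩
    · refine ⟨T, -1, h1, h2, Or.inr rfl, fun A hA hc => ?_⟩
      have h4 := not_lt.1 (h3 A hA hc)
      have hcard : (A.image x).card = d + 1 := by
        rw [Finset.card_image_of_injOn, hc]
        exact hxinj.mono (Finset.coe_subset.2 (hA.trans h1))
      have h5 : scWs F (A.image x) ≠ 0 := by
        apply scWs_ne_zero F _ hcard
        exact hgx _ (Finset.image_subset_image (hA.trans h1)) hcard.le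
      have := lt_of_le_of_ne h4 h5
      linarith
  have hσ0 : σ ≠ 0 := by rcases hσ with rfl | rfl <;> norm_num
  set g := T.orderEmbOfFin hTc with hg
  have hgT : ∀ i, g i ∈ T := fun i => Finset.orderEmbOfFin_mem T hTc i
  have hgN : ∀ i, g i < N := fun i => by simpa using hTN (hgT i)
  let mid : Fin (2 * (d + 1) + 1) := ⟨d + 1, by omega⟩
  set m := g mid with hm
  have hmN : m < N := hgN mid
  have hxg : Function.Injective (fun i => x (g i)) := by
    intro i j hij
    exact g.injective (hxinj (hTN (hgT i)) (hTN (hgT j)) hij)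
  set XL := (Finset.Iio mid).image (fun i => x (g i)) with hXL
  set XR := (Finset.Ioi mid).image (fun i => x (g i)) with hXR
  have hLc : XL.card = d + 1 := by
    rw [hXL, Finset.card_image_of_injective _ hxg, Fin.card_Iio]
  have hRc : XR.card = d + 1 := by
    rw [hXR, Finset.card_image_of_injective _ hxg, Fin.card_Ioi]
    show 2 * (d + 1) + 1 - 1 - (d + 1) = d + 1
    omega
  have hXT : XL ∪ XR ⊆ T.image x := by
    apply Finset.union_subset
    · intro s hs
      obtain ⟨i, -, rfl⟩ := Finset.mem_image.1 hs
      exact Finset.mem_image_of_mem x (hgT i)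
    · intro s hs
      obtain ⟨i, -, rfl⟩ := Finset.mem_image.1 hs
      exact Finset.mem_image_of_mem x (hgT i)
  have hhomX : ∀ Y ⊆ XL ∪ XR, Y.card = d + 1 → 0 < σ * scWs F Y := by
    intro Y hY hYc
    obtain ⟨A, hA, rfl⟩ := Finset.subset_image_iff.1 (hY.trans hXT)
    apply hhom A (by exact_mod_cast hA)
    rw [← hYc, Finset.card_image_of_injOn]
    exact hxinj.mono (Set.Subset.trans (by exact_mod_cast hA) (Finset.coe_subset.2 hTN))
  have hgpX : ScGP F (XL ∪ XR) := by
    intro Q hQ hc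
    exact hgx Q ((hQ.trans hXT).trans (Finset.image_subset_image hTN)) hc
  -- opposite sign
  obtain ⟨t0, ht0, ht0s⟩ : ∃ t : Fin (d + 1) → ℝ, (∀ i, t i ∈ Ioo (p m) (p (m + 1))) ∧
      σ * scW F t < 0 := by
    obtain ⟨⟨t, ht, h1⟩, ⟨t', ht', h2⟩⟩ := hp m hmN
    rcases hσ with rfl | rfl
    · exact ⟨t', ht', by linarith⟩
    · exact ⟨t, ht, by linarith⟩
  have hopen : IsOpen {t : Fin (d + 1) → ℝ | σ * scW F t < 0} :=
    isOpen_lt (continuous_const.mul (scW_continuous F hcont)) continuous_const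
  obtain ⟨ε, hε, hball⟩ := Metric.isOpen_iff.1 hopen t0 ht0s
  let t0' : ℕ → ℝ := fun i => if h : i < d + 1 then t0 ⟨i, h⟩ else 0
  have ht0' : ∀ i < d + 1, t0' i ∈ Ioo (p m) (p (m + 1)) := by
    intro i hi
    simp only [t0', hi, dif_pos]
    exact ht0 _
  obtain ⟨y, hy, hgy⟩ := sc_gp_seq F a b hz (XL ∪ XR) hgpX
    (fun i => max (t0' i - ε) (p m)) (fun i => min (t0' i + ε) (p (m + 1))) (d + 1) (by
      intro i hi
      have h1 := ht0' i hi
      refine ⟨max_lt (lt_min (by linarith) (by linarith [h1.2]))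
        (lt_min (by linarith [h1.1]) (by linarith [h1.1, h1.2])), ?_⟩
      exact (Ioo_subset_Ioo (le_max_right _ _) (min_le_right _ _)).trans (hIoo m hmN))
  let t : Fin (d + 1) → ℝ := fun i => y i
  have htI : ∀ i, t i ∈ Ioo (p m) (p (m + 1)) := fun i =>
    Ioo_subset_Ioo (le_max_right _ _) (min_le_right _ _) (hy i i.2)
  have hts : σ * scW F t < 0 := by
    apply hball
    rw [Metric.mem_ball, dist_pi_lt_iff hε]
    intro i
    have h1 := hy i i.2
    have h2 : t0' i = t0 i := dif_pos i.2
    have h3 := (le_max_left _ _).trans_lt h1.1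
    have h4 := h1.2.trans_le (min_le_left _ _)
    rw [h2] at h3 h4
    rw [Real.dist_eq, abs_lt]
    exact ⟨by show -ε < y i - t0 i; linarith, by show y i - t0 i < ε; linarith⟩
  have htinj : Function.Injective t := by
    rw [← Matrix.det_vandermonde_ne_zero_iff]
    intro h0
    rw [scW, h0] at hts
    simp at hts
  set B := Finset.univ.image t with hB
  have hBc : B.card = d + 1 := by
    rw [hB, Finset.card_image_of_injective _ htinj]; simp
  have hBI : ∀ s ∈ B, s ∈ Ioo (p m) (p (m + 1)) := by
    intro s hs
    obtain ⟨i, -, rfl⟩ := Finset.mem_image.1 hs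
    exact htI i
  have hBW : scWs F B = scW F t := scWs_eq F t htinj B rfl
  have hgpB : ScGP F ((XL ∪ XR) ∪ B) := by
    intro Q hQ hc
    apply hgy Q (hQ.trans (Finset.union_subset_union_right ?_)) hc
    intro s hs
    obtain ⟨i, -, rfl⟩ := Finset.mem_image.1 hs
    exact Finset.mem_image_of_mem y (Finset.mem_range.2 i.2)
  have hfin := sc_exchange F hcont a b hz XL XR B (p m) (p (m + 1)) ?_ ?_ hBI
    (fun s hs => hIoo m hmN (hBI s hs)) hLc hRc hgpB σ hσ0 hhomX (d + 1) B subset_rfl hBc ∅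
    (by simp) (by simp)
  · rw [Finset.union_empty, hBW] at hfin
    linarith
  · intro s hs
    obtain ⟨i, hi, rfl⟩ := Finset.mem_image.1 hs
    have hlt : g i < m := g.strictMono (Finset.mem_Iio.1 hi)
    have h1 := hx (g i) (hgN i)
    exact ⟨hIoo _ (hgN i) h1, h1.2.le.trans (hpm _ _ hlt hmN.le)⟩
  · intro s hs
    obtain ⟨i, hi, rfl⟩ := Finset.mem_image.1 hs
    have hlt : m < g i := g.strictMono (Finset.mem_Ioi.1 hi)
    have h1 := hx (g i) (hgN i)
    exact ⟨hIoo _ (hgN i) h1, (hpm _ _ hlt (hgN i).le).trans h1.1.le⟩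

/-! ### Intervals with one weak orientation -/

theorem sc_closed_sign {d : ℕ} (F : ℝ → (Fin (d + 1) → ℝ)) (hcont : Continuous F) (u v : ℝ)
    (huv : u < v) (σ : ℝ) (h : ∀ t : Fin (d + 1) → ℝ, (∀ i, t i ∈ Ioo u v) → 0 ≤ σ * scW F t)
    (t : Fin (d + 1) → ℝ) (ht : ∀ i, t i ∈ Icc u v) : 0 ≤ σ * scW F t := by
  let γ : ℝ → (Fin (d + 1) → ℝ) := fun δ i => t i + δ * ((u + v) / 2 - t i)
  have hγ : Continuous fun δ => σ * scW F (γ δ) := by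
    apply continuous_const.mul
    apply (scW_continuous F hcont).comp
    fun_prop
  have h0 : γ 0 = t := by ext i; simp [γ]
  have hlim := (hγ.tendsto 0).mono_left (nhdsWithin_le_nhds (s := Ioi 0))
  simp only [h0] at hlim
  apply ge_of_tendsto hlim
  filter_upwards [Ioo_mem_nhdsGT (show (0 : ℝ) < 1 by norm_num)] with δ hδ
  apply h
  intro i
  have h1 := ht i
  have e1 := mul_pos hδ.1 (sub_pos.2 huv)
  have e2 := mul_nonneg (sub_nonneg.2 hδ.2.le) (sub_nonneg.2 h1.1)
  have e3 := mul_nonneg (sub_nonneg.2 hδ.2.le) (sub_nonneg.2 h1.2)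
  constructor
  · show u < t i + δ * ((u + v) / 2 - t i)
    nlinarith
  · show t i + δ * ((u + v) / 2 - t i) < v
    nlinarith

theorem sc_close {d : ℕ} (F : ℝ → (Fin (d + 1) → ℝ)) (hF0 : ∀ s, F s ≠ 0)
    (a b : ℝ) (hz : ScZ F a b) (u v : ℝ) (huv : u < v) (hab : Icc u v ⊆ Icc a b) (σ : ℝ)
    (hσ : σ ≠ 0) (hpos : ∀ t : Fin (d + 1) → ℝ, (∀ i, t i ∈ Icc u v) → 0 ≤ σ * scW F t)
    (r1 r2 : ℝ) (hr : r1 < r2) (hruv : Ioo r1 r2 ⊆ Icc u v) (T : Finset ℝ) :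
    (∀ t ∈ T, t ∈ Icc u v) → T.card ≤ d + 1 → ((∀ t ∈ T, t ≤ r1) ∨ (∀ t ∈ T, r2 ≤ t)) →
      LinearIndepOn ℝ F (T : Set ℝ) := by
  induction T using Finset.induction_on with
  | empty => intro _ _ _; rw [Finset.coe_empty]; exact linearIndepOn_empty ℝ F
  | insert t0 T ht0 ih =>
    intro hT hc hroom
    rw [Finset.card_insert_of_notMem ht0] at hc
    have hTI : ∀ t ∈ T, t ∈ Icc u v := fun t ht => hT t (Finset.mem_insert_of_mem ht)
    have ht0I : t0 ∈ Icc u v := hT t0 (Finset.mem_insert_self _ _)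
    have hLI := ih hTI (by omega)
      (hroom.imp (fun h t ht => h t (Finset.mem_insert_of_mem ht))
        (fun h t ht => h t (Finset.mem_insert_of_mem ht)))
    rw [Finset.coe_insert]
    apply hLI.insert
    intro hspan
    obtain ⟨c, hcs⟩ := (Submodule.mem_span_image_finset_iff_exists_fun ℝ).1 hspan
    obtain ⟨ti, hci⟩ : ∃ i, c i ≠ 0 := by
      by_contra hcon
      push Not at hcon
      apply hF0 t0
      rw [← hcs]
      simp [hcon]
    have htiT : (ti : ℝ) ∈ T := ti.2
    have hne : t0 ≠ (ti : ℝ) := fun h => ht0 (h ▸ htiT)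
    obtain ⟨P, hTP, hPc, hPI, ht0P, hPLI⟩ := sc_extend F a b hz u v huv hab t0 T hLI hTI ht0 d
      (by omega) (by omega)
    set R := P.erase (ti : ℝ) with hR
    have htiP : (ti : ℝ) ∈ P := hTP htiT
    set K := c ti * ((∏ x ∈ R, (x - t0)) * ∏ x ∈ R, (x - (ti : ℝ))) with hK
    have key : ∀ g ∈ Icc u v, g ≠ t0 → g ∉ P → LinearIndepOn ℝ F ((insert g P : Finset ℝ) : Set ℝ) →
        0 < K * ((g - t0) * (g - (ti : ℝ))) := by
      intro g hgI hgt0 hgP hgLI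
      have hgR : g ∉ R := fun h => hgP (Finset.mem_of_mem_erase h)
      have hgti : g ≠ ti := fun h => hgP (h ▸ htiP)
      set E := insert g R with hE
      have hEc : E.card = d := by
        rw [hE, Finset.card_insert_of_notMem hgR, hR, Finset.card_erase_of_mem htiP]
        have := Finset.card_pos.2 ⟨_, htiP⟩
        omega
      have ht0E : t0 ∉ E := by
        rw [hE, Finset.mem_insert, not_or]
        exact ⟨hgt0.symm, fun h => ht0P (Finset.mem_of_mem_erase h)⟩
      have htiE : (ti : ℝ) ∉ E := by
        rw [hE, Finset.mem_insert, not_or]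
        exact ⟨hgti.symm, Finset.notMem_erase _ _⟩
      have hEI : ∀ x ∈ E, x ∈ Icc u v := by
        intro x hx
        rcases Finset.mem_insert.1 hx with rfl | hx
        · exact hgI
        · exact hPI x (Finset.mem_of_mem_erase hx)
      have hWs : ∀ s ∈ Icc u v, s ∉ E → 0 ≤ σ * scWs F (insert s E) := by
        intro s hs hsE
        have hcard : (insert s E).card = d + 1 := by
          rw [Finset.card_insert_of_notMem hsE, hEc]
        rw [scWs, dif_pos hcard]
        apply hpos
        intro i
        rcases Finset.mem_insert.1 (Finset.orderEmbOfFin_mem _ hcard i) with h | h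
        · rw [h]; exact hs
        · exact hEI _ h
      have h1 := hWs t0 ht0I ht0E
      have h2 := hWs ti (hTI _ htiT) htiE
      have hins : insert (ti : ℝ) E = insert g P := by
        rw [hE, Finset.insert_comm, hR, Finset.insert_erase htiP]
      have h3 : scWs F (insert (ti : ℝ) E) ≠ 0 := by
        rw [hins]
        apply scWs_ne_zero F _ _ hgLI
        rw [Finset.card_insert_of_notMem hgP, hPc]
      rw [scWs_insert F E hEc _ ht0E] at h1
      rw [scWs_insert F E hEc _ htiE] at h2 h3
      set φ := scPhi F (E.orderEmbOfFin hEc) with hφ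
      set V := Matrix.det (Matrix.vandermonde (E.orderEmbOfFin hEc)) with hV
      have hφ0 : ∀ e ∈ E, φ (F e) = 0 := by
        intro e he
        have : e ∈ Set.range (E.orderEmbOfFin hEc) := by
          rw [Finset.range_orderEmbOfFin]; exact he
        obtain ⟨k, rfl⟩ := this
        exact scPhi_zero F _ k
      have hφt : φ (F t0) = c ti * φ (F ti) := by
        rw [← hcs, map_sum, Finset.sum_eq_single ti]
        · simp
        · intro k _ hk
          have : (k : ℝ) ∈ E := by
            rw [hE, hR]
            apply Finset.mem_insert_of_mem
            apply Finset.mem_erase.2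
            exact ⟨fun h => hk (Subtype.ext h), hTP k.2⟩
          rw [map_smul, hφ0 _ this, smul_zero]
        · intro h; exact absurd (Finset.mem_univ _) h
      rw [hφt] at h1
      have hφn : φ (F ti) ≠ 0 := fun h => h3 (by rw [h]; ring)
      have hVn : V ≠ 0 := fun h => h3 (by rw [h]; ring)
      have hpr : ∀ s, ∏ e ∈ E, (e - s) = (g - s) * ∏ x ∈ R, (x - s) := by
        intro s
        rw [hE, Finset.prod_insert hgR]
      rw [hpr] at h1 h2
      have h4 := mul_nonneg h1 h2
      have hsq : 0 < (σ * φ (F ti) * V) ^ 2 :=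
        sq_pos_of_ne_zero (mul_ne_zero (mul_ne_zero hσ hφn) hVn)
      have h5 : 0 ≤ (σ * φ (F ti) * V) ^ 2 * (K * ((g - t0) * (g - (ti : ℝ)))) := by
        rw [hK]
        calc (0 : ℝ) ≤ _ := h4
          _ = _ := by ring
      have h6 : 0 ≤ K * ((g - t0) * (g - (ti : ℝ))) := nonneg_of_mul_nonneg_right h5 hsq
      refine lt_of_le_of_ne h6 (Ne.symm ?_)
      apply mul_ne_zero
      · rw [hK]
        apply mul_ne_zero hci
        apply mul_ne_zero
        · rw [Finset.prod_ne_zero_iff]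
          intro x hx h
          rw [sub_eq_zero] at h
          exact ht0P (h ▸ Finset.mem_of_mem_erase hx)
        · rw [Finset.prod_ne_zero_iff]
          intro x hx h
          rw [sub_eq_zero] at h
          exact Finset.ne_of_mem_erase hx h
      · exact mul_ne_zero (sub_ne_zero.2 hgt0) (sub_ne_zero.2 hgti)
    have pick : ∀ y z, y < z → Ioo y z ⊆ Icc u v → ∃ g ∈ Ioo y z,
        0 < K * ((g - t0) * (g - (ti : ℝ))) := by
      intro y z hyz hsub
      obtain ⟨s, hs, hs1, hs2⟩ := sc_avoid F a b hz {P} (by simp [hPc]) (insert t0 P) y z hyz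
        (hsub.trans hab)
      rw [Finset.mem_insert, not_or] at hs1
      refine ⟨s, hs, key s (hsub hs) hs1.1 hs1.2 ?_⟩
      rw [Finset.coe_insert]
      exact hPLI.insert (hs2 P (by simp))
    obtain ⟨g, hg, hgK⟩ := pick r1 r2 hr hruv
    obtain ⟨g', hg', hgK'⟩ := pick (min t0 ti) (max t0 ti) (min_lt_max.2 hne) (by
      intro s hs
      have h1 := hTI _ htiT
      exact ⟨(le_min ht0I.1 h1.1).trans hs.1.le, hs.2.le.trans (max_le ht0I.2 h1.2)⟩)
    have hp1 : 0 < (g - t0) * (g - (ti : ℝ)) := by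
      rcases hroom with h | h
      · have h1 := h t0 (Finset.mem_insert_self _ _)
        have h2 := h ti (Finset.mem_insert_of_mem htiT)
        exact mul_pos (by linarith [hg.1]) (by linarith [hg.1])
      · have h1 := h t0 (Finset.mem_insert_self _ _)
        have h2 := h ti (Finset.mem_insert_of_mem htiT)
        exact mul_pos_of_neg_of_neg (by linarith [hg.2]) (by linarith [hg.2])
    have hp2 : (g' - t0) * (g' - (ti : ℝ)) < 0 := by
      rcases lt_or_gt_of_ne hne with h | h
      · rw [min_eq_left h.le, max_eq_right h.le] at hg'
        exact mul_neg_of_pos_of_neg (by linarith [hg'.1]) (by linarith [hg'.2])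
      · rw [min_eq_right h.le, max_eq_left h.le] at hg'
        exact mul_neg_of_neg_of_pos (by linarith [hg'.2]) (by linarith [hg'.1])
    have hKpos : 0 < K := pos_of_mul_pos_left hgK hp1.le
    have := mul_neg_of_pos_of_neg hKpos hp2
    linarith

/-- Every `d + 1` parameters in `[u, v]` give independent vectors. -/
def ScConvex {d : ℕ} (F : ℝ → (Fin (d + 1) → ℝ)) (u v : ℝ) : Prop :=
  ∀ T : Finset ℝ, (∀ t ∈ T, t ∈ Icc u v) → T.card = d + 1 → LinearIndepOn ℝ F (T : Set ℝ)

theorem sc_piece {d : ℕ} (hd : 1 ≤ d) (F : ℝ → (Fin (d + 1) → ℝ)) (hcont : Continuous F)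
    (hF0 : ∀ s, F s ≠ 0) (a b : ℝ) (hz : ScZ F a b) (u v : ℝ) (hau : a ≤ u) (huv : u ≤ v)
    (hvb : v ≤ b) (hgood : ¬ ScBad F u v) :
    ∃ m, u ≤ m ∧ m ≤ v ∧ ScConvex F u m ∧ ScConvex F m v := by
  rcases huv.eq_or_lt with rfl | hlt
  · have : ScConvex F u u := by
      intro T hT hc
      have h1 : T ⊆ {u} := by
        intro t ht
        have := hT t ht
        rw [Set.Icc_self] at this
        simpa using this
      have h2 := Finset.card_le_card h1
      simp at h2
      omega
    exact ⟨u, le_rfl, le_rfl, this, this⟩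
  · obtain ⟨σ, hσ, hs⟩ : ∃ σ : ℝ, σ ≠ 0 ∧
        ∀ t : Fin (d + 1) → ℝ, (∀ i, t i ∈ Ioo u v) → 0 ≤ σ * scW F t := by
      by_cases h : ∃ t : Fin (d + 1) → ℝ, (∀ i, t i ∈ Ioo u v) ∧ 0 < scW F t
      · refine ⟨1, one_ne_zero, fun t ht => ?_⟩
        by_contra hcon
        exact hgood ⟨h, t, ht, by linarith⟩
      · refine ⟨-1, by norm_num, fun t ht => ?_⟩
        by_contra hcon
        exact h ⟨t, ht, by linarith⟩
    have hs' := sc_closed_sign F hcont u v hlt σ hs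
    have hab : Icc u v ⊆ Icc a b := Icc_subset_Icc hau hvb
    refine ⟨(u + v) / 2, by linarith, by linarith, ?_, ?_⟩
    · intro T hT hc
      refine sc_close F hF0 a b hz u v hlt hab σ hσ hs' ((u + v) / 2) v (by linarith) ?_ T ?_
        hc.le (Or.inl fun t ht => (hT t ht).2)
      · intro s hs; exact ⟨by linarith [hs.1], hs.2.le⟩
      · intro t ht; exact ⟨(hT t ht).1, by linarith [(hT t ht).2]⟩
    · intro T hT hc
      refine sc_close F hF0 a b hz u v hlt hab σ hσ hs' u ((u + v) / 2) (by linarith) ?_ T ?_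
        hc.le (Or.inr fun t ht => (hT t ht).1)
      · intro s hs; exact ⟨hs.1.le, by linarith [hs.2]⟩
      · intro t ht; exact ⟨by linarith [(hT t ht).1], (hT t ht).2⟩

/-! ### Lifting a curve -/

/-- The lifted curve `(1, γ)`, extended constantly outside `[a, b]`. -/
noncomputable def scLift {d : ℕ} (a b : ℝ) (hab : a ≤ b) (γ : ℝ → (Fin d → ℝ)) :
    ℝ → (Fin (d + 1) → ℝ) :=
  fun s => Fin.cons 1 (γ (projIcc a b hab s))

theorem scLift_continuous {d : ℕ} (a b : ℝ) (hab : a ≤ b) (γ : ℝ → (Fin d → ℝ))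
    (hγ : ContinuousOn γ (Icc a b)) : Continuous (scLift a b hab γ) := by
  have h1 : Continuous fun s => γ (projIcc a b hab s) :=
    (continuousOn_iff_continuous_restrict.1 hγ).comp continuous_projIcc
  refine continuous_pi fun i => ?_
  refine Fin.cases ?_ (fun j => ?_) i
  · simp only [scLift, Fin.cons_zero]; exact continuous_const
  · simp only [scLift, Fin.cons_succ]; exact (continuous_apply j).comp h1

theorem scLift_zeros {d : ℕ} (a b : ℝ) (hab : a ≤ b) (γ : ℝ → (Fin d → ℝ))
    (hγ : CurveCrossing (d + 1) (Icc a b) γ) : ScZ (scLift a b hab γ) a b := by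
  intro φ hφ
  have hrep : ∀ v : Fin (d + 1) → ℝ, φ v = v 0 * φ (Pi.single 0 1) +
      ∑ i : Fin d, φ (Pi.single i.succ 1) * v i.succ := by
    intro v
    have h1 := LinearMap.pi_apply_eq_sum_univ φ v
    rw [h1, Fin.sum_univ_succ]
    have h2 : ∀ i : Fin (d + 1), (fun j => if i = j then (1 : ℝ) else 0) = Pi.single i 1 := by
      intro i; ext j; simp [Pi.single_apply, eq_comm]
    simp only [h2, smul_eq_mul]
    congr 1
    exact Finset.sum_congr rfl fun i _ => mul_comm _ _
  set w : Fin d → ℝ := fun i => φ (Pi.single i.succ 1) with hw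
  set c := φ (Pi.single 0 1) with hc
  have hval : ∀ s ∈ Icc a b, φ (scLift a b hab γ s) = c + ∑ i, w i * γ s i := by
    intro s hs
    rw [hrep]
    simp [scLift, projIcc_of_mem hab hs, hw]
  by_cases hw0 : w = 0
  · have hc0 : c ≠ 0 := by
      intro hc0
      apply hφ
      ext i
      refine Fin.cases ?_ (fun j => ?_) i
      · simpa using hc0
      · simpa using congrFun hw0 j
    have : {s | s ∈ Icc a b ∧ φ (scLift a b hab γ s) = 0} = ∅ := by
      ext s
      simp only [Set.mem_setOf_eq, Set.mem_empty_iff_false, iff_false, not_and]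
      intro hs
      rw [hval s hs, hw0]
      simpa using hc0
    rw [this]
    simp
  · refine (Set.encard_le_encard ?_).trans (hγ {x | ∑ i, w i * x i = -c} ⟨w, -c, hw0, rfl⟩)
    rintro s ⟨hs, h0⟩
    rw [hval s hs] at h0
    exact ⟨hs, by show ∑ i, w i * γ s i = -c; linarith⟩

theorem scLift_convex {d : ℕ} (a b : ℝ) (hab : a ≤ b) (γ : ℝ → (Fin d → ℝ)) (u v : ℝ)
    (hau : a ≤ u) (hvb : v ≤ b) (h : ScConvex (scLift a b hab γ) u v) :
    CurveCrossing d (Icc u v) γ := by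
  rintro _ ⟨w, c, hw, rfl⟩
  by_contra hcon
  rw [not_le] at hcon
  have h1 : ((d + 1 : ℕ) : ℕ∞) ≤
      {t | t ∈ Icc u v ∧ γ t ∈ {x | ∑ i, w i * x i = c}}.encard := by
    push_cast
    exact Order.add_one_le_of_lt hcon
  obtain ⟨T, hT, hTc⟩ := Set.exists_subset_encard_eq h1
  have hfin : T.Finite := Set.finite_of_encard_eq_coe hTc
  obtain ⟨T, rfl⟩ := hfin.exists_finset_coe
  rw [Set.encard_coe_eq_coe_finsetCard, Nat.cast_inj] at hTc
  have hLI := h T (fun t ht => (hT ht).1) hTc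
  let φ : (Fin (d + 1) → ℝ) →ₗ[ℝ] ℝ :=
    Fintype.linearCombination ℝ (Fin.cons (-c) w : Fin (d + 1) → ℝ)
  have hφv : ∀ v : Fin (d + 1) → ℝ, φ v = v 0 * (-c) + ∑ i : Fin d, v i.succ * w i := by
    intro v
    simp [φ, Fintype.linearCombination_apply, Fin.sum_univ_succ]
  have hker : ∀ t ∈ T, φ (scLift a b hab γ t) = 0 := by
    intro t ht
    obtain ⟨h2, h3⟩ := hT ht
    have h3' : ∑ i, w i * γ t i = c := h3
    have h4 : t ∈ Icc a b := ⟨hau.trans h2.1, h2.2.trans hvb⟩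
    rw [hφv]
    simp only [scLift, projIcc_of_mem hab h4, Fin.cons_zero, Fin.cons_succ]
    have : ∑ i, γ t i * w i = c := by
      rw [← h3']; exact Finset.sum_congr rfl fun i _ => mul_comm _ _
    rw [this]; ring
  have hLI' : LinearIndependent ℝ (fun x : T => scLift a b hab γ x) := hLI
  have hspan := hLI'.span_eq_top_of_card_eq_finrank' (by simp [hTc])
  have hφ0 : φ = 0 := by
    apply LinearMap.ext_on_range hspan
    intro x
    rw [hker x x.2]; rfl
  apply hw
  ext i
  have h5 := hφv (Pi.single i.succ 1)
  rw [hφ0] at h5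
  simp [Pi.single_apply] at h5
  simpa using h5.symm

/-- For every integer `d ≥ 2` there exists `M = M(d)` such that every
`(d+1)`-crossing curve `γ : [a, b] → ℝ^d` can be subdivided into at most `M` convex
(`d`-crossing) curves: there are `k ≤ M` subdivision points `a = t 0 ≤ t 1 ≤ ⋯ ≤ t k = b`
such that `γ` restricted to each `[t j, t (j+1)]` is `d`-crossing. -/
theorem subdivision_of_curves :
    ∀ d : ℕ, 2 ≤ d → ∃ M : ℕ,
      ∀ (a b : ℝ), a ≤ b → ∀ γ : ℝ → (Fin d → ℝ), ContinuousOn γ (Set.Icc a b) →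
        CurveCrossing (d + 1) (Set.Icc a b) γ →
        ∃ k : ℕ, k ≤ M ∧ ∃ t : Fin (k + 1) → ℝ,
          t 0 = a ∧ t (Fin.last k) = b ∧ Monotone t ∧
          ∀ j : Fin k, CurveCrossing d (Set.Icc (t j.castSucc) (t j.succ)) γ := by
  intro d hd
  obtain ⟨N, hN⟩ := sc_no_chain d
  refine ⟨2 * N, fun a b hab γ hγ hcr => ?_⟩
  set F := scLift a b hab γ with hF
  have hcont : Continuous F := scLift_continuous a b hab γ hγ
  have hz : ScZ F a b := scLift_zeros a b hab γ hcr
  have hF0 : ∀ s, F s ≠ 0 := by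
    intro s h
    have := congrFun h 0
    simp [hF, scLift] at this
  obtain ⟨k, hk, hpart⟩ := sc_part_of_not_chain (ScBad F) (scBad_mono F) (scBad_open F) N a b hab
    (hN F hcont a b hab hz)
  have hpart2 := sc_part_double _ (fun u v => a ≤ u ∧ v ≤ b ∧ ScConvex F u v) a b
    (fun u v hu huv hv hg => by
      obtain ⟨m, h1, h2, h3, h4⟩ := sc_piece (by omega) F hcont hF0 a b hz u v hu huv hv hg
      exact ⟨m, h1, h2, ⟨hu, h2.trans hv, h3⟩, ⟨hu.trans h1, hv, h4⟩⟩) k a b le_rfl le_rfl hpart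
  obtain ⟨t, h0, hl, hm, ht⟩ := sc_part_tuple _ (2 * k) a b hab hpart2
  refine ⟨2 * k, by omega, t, h0, hl, hm, fun j => ?_⟩
  obtain ⟨h1, h2, h3⟩ := ht j
  exact scLift_convex a b hab γ _ _ h1 h2 h3
end

section
/- For every integer d ≥ 2 there exists M = M(d) such that every (d+1)-crossing polygonal path π = p_1p_2⋯p_n in general position in R^d can be subdivided into at most M convex polygonal paths; that is, there are indices 1 = i_0 < i_1 < ⋯ < i_k = n with k ≤ M such that each polygonal path p_{i_{j-1}}p_{i_{j-1}+1}⋯p_{i_j} is d-crossing. -/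
open Set

/-- flip condition for signs of `(k+1)`-subsets of the integer interval `[lo, hi]`. -/
def PFlip (k : ℕ) (sgn : Finset ℕ → Bool) (lo hi : ℕ) : Prop :=
  ∀ A : Finset ℕ, A ⊆ Finset.Icc lo hi → A.card = k →
    ∀ i j l : ℕ, lo ≤ i → i < j → j < l → l ≤ hi → i ∉ A → j ∉ A → l ∉ A →
      sgn (insert i A) ≠ sgn (insert j A) → sgn (insert j A) ≠ sgn (insert l A) → False

/-- all `(k+1)`-subsets of `[a, b]` have the same sign. -/
def PHomog (k : ℕ) (sgn : Finset ℕ → Bool) (a b : ℕ) : Prop :=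
  ∀ S T : Finset ℕ, S ⊆ Finset.Icc a b → T ⊆ Finset.Icc a b → S.card = k + 1 →
    T.card = k + 1 → sgn S = sgn T

/-- no element of `C` lies in `(a, b]`. -/
def PFree (C : Finset ℕ) (a b : ℕ) : Prop := ∀ c ∈ C, ¬ (a < c ∧ c ≤ b)

lemma PFree.mono {C C' : Finset ℕ} {a b : ℕ} (h : PFree C a b) (hC : C' ⊆ C) : PFree C' a b :=
  fun c hc => h c (hC hc)

lemma phomog_two (k : ℕ) (sgn : Finset ℕ → Bool) (a b : ℕ) (h : b ≤ a + 1) :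
    PHomog (k + 1) sgn a b := by
  intro S T hS hT cS cT
  have hc : (Finset.Icc a b).card ≤ 2 := by simp; omega
  have h1 : S = Finset.Icc a b := Finset.eq_of_subset_of_card_le hS (by omega)
  have h2 : T = Finset.Icc a b := Finset.eq_of_subset_of_card_le hT (by omega)
  rw [h1, h2]

/-- exchange argument: if replacing an element of a set by a larger one preserves sign `s`,
then replacing a whole set does. -/
lemma exchange_up (k : ℕ) (sgn : Finset ℕ → Bool) (a b : ℕ) (s : Bool)
    (hmono : ∀ B : Finset ℕ, B ⊆ Finset.Icc a b → B.card = k → ∀ x y, a ≤ x → x < y → y ≤ b →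
      x ∉ B → y ∉ B → sgn (insert x B) = s → sgn (insert y B) = s)
    (T : Finset ℕ) (hT : T ⊆ Finset.Icc a b) : ∀ (m : ℕ) (S : Finset ℕ), S ⊆ Finset.Icc a b →
      S.card = k + 1 → T.card = k + 1 → (S \ T).card = m →
      (∀ x ∈ S \ T, ∀ y ∈ T \ S, x < y) → sgn S = s → sgn T = s := by
  intro m
  induction m with
  | zero =>
    intro S hS cS cT h0 _ h
    have : S ⊆ T := by simpa [Finset.sdiff_eq_empty_iff_subset] using h0
    rw [← Finset.eq_of_subset_of_card_le this (by omega)]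
    exact h
  | succ m ih =>
    intro S hS cS cT hm hlt h
    obtain ⟨x, hx⟩ : (S \ T).Nonempty := by rw [← Finset.card_pos]; omega
    have hcard : (T \ S).card = m + 1 := by
      have h1 := Finset.card_sdiff_add_card_inter S T
      have h2 := Finset.card_sdiff_add_card_inter T S
      rw [Finset.inter_comm] at h2
      omega
    obtain ⟨y, hy⟩ : (T \ S).Nonempty := by rw [← Finset.card_pos]; omega
    have hxy := hlt x hx y hy
    rw [Finset.mem_sdiff] at hx hy
    have hyS : y ∉ S.erase x := fun h => hy.2 (Finset.mem_of_mem_erase h)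
    have hce : (S.erase x).card = k := by rw [Finset.card_erase_of_mem hx.1]; omega
    have hsub : S.erase x ⊆ Finset.Icc a b := (Finset.erase_subset _ _).trans hS
    have hxI := Finset.mem_Icc.1 (hS hx.1)
    have hyI := Finset.mem_Icc.1 (hT hy.1)
    apply ih (insert y (S.erase x))
    · exact Finset.insert_subset (hT hy.1) hsub
    · rw [Finset.card_insert_of_notMem hyS]; omega
    · exact cT
    · have : insert y (S.erase x) \ T = (S \ T).erase x := by
        ext z; simp only [Finset.mem_sdiff, Finset.mem_insert, Finset.mem_erase]
        constructor
        · rintro ⟨rfl | h, h'⟩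
          · exact absurd hy.1 h'
          · exact ⟨h.1, h.2, h'⟩
        · rintro ⟨h, h', h''⟩; exact ⟨Or.inr ⟨h, h'⟩, h''⟩
      rw [this, Finset.card_erase_of_mem (Finset.mem_sdiff.2 hx)]; omega
    · intro u hu v hv
      apply hlt
      · simp only [Finset.mem_sdiff, Finset.mem_insert, Finset.mem_erase] at hu ⊢
        rcases hu with ⟨rfl | h, h'⟩
        · exact absurd hy.1 h'
        · exact ⟨h.2, h'⟩
      · simp only [Finset.mem_sdiff, Finset.mem_insert, Finset.mem_erase] at hv ⊢
        refine ⟨hv.1, fun h => hv.2 (Or.inr ⟨?_, h⟩)⟩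
        rintro rfl; exact hx.2 hv.1
    · apply hmono _ hsub hce x y hxI.1 hxy hyI.2 (by simp) hyS
      rw [Finset.insert_erase hx.1]; exact h

theorem comb (k : ℕ) : ∃ M : ℕ, ∀ (sgn : Finset ℕ → Bool) (lo hi : ℕ), PFlip k sgn lo hi →
    ∃ C : Finset ℕ, C.card ≤ M ∧ ∀ a b, lo ≤ a → b ≤ hi → PFree C a b → PHomog k sgn a b := by
  induction k with
  | zero =>
    refine ⟨2, fun sgn lo hi hf => ?_⟩
    have key : ∃ e, ∀ a b, lo ≤ a → b ≤ hi → (b < e ∨ e ≤ a) → PHomog 0 sgn a b := by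
      by_cases hex : ∃ e, lo ≤ e ∧ e ≤ hi ∧ sgn {e} ≠ sgn {lo}
      · classical
        refine ⟨Nat.find hex, ?_⟩
        obtain ⟨h1, h2, h3⟩ := Nat.find_spec hex
        have hmin : ∀ m, m < Nat.find hex → lo ≤ m → m ≤ hi → sgn {m} = sgn {lo} := by
          intro m hm hl hh
          by_contra hne
          exact Nat.find_min hex hm ⟨hl, hh, hne⟩
        have hmax : ∀ m, Nat.find hex ≤ m → m ≤ hi → sgn {m} = sgn {Nat.find hex} := by
          intro m hm hh
          rcases hm.eq_or_lt with h | h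
          · rw [← h]
          · by_contra hne
            have hlt : lo < Nat.find hex := by
              rcases h1.eq_or_lt with h | h
              · exact absurd (by rw [← h]) h3
              · exact h
            exact hf ∅ (by simp) rfl lo (Nat.find hex) m le_rfl hlt h hh (by simp) (by simp)
              (by simp) (by simpa using h3.symm) (by simpa using Ne.symm hne)
        intro a b ha hb hab S T hS hT cS cT
        obtain ⟨x, rfl⟩ := Finset.card_eq_one.1 cS
        obtain ⟨y, rfl⟩ := Finset.card_eq_one.1 cT
        simp only [Finset.singleton_subset_iff, Finset.mem_Icc] at hS hT
        rcases hab with h | h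
        · rw [hmin x (by omega) (by omega) (by omega), hmin y (by omega) (by omega) (by omega)]
        · rw [hmax x (by omega) (by omega), hmax y (by omega) (by omega)]
      · push Not at hex
        refine ⟨0, ?_⟩
        intro a b ha hb hab S T hS hT cS cT
        obtain ⟨x, rfl⟩ := Finset.card_eq_one.1 cS
        obtain ⟨y, rfl⟩ := Finset.card_eq_one.1 cT
        simp only [Finset.singleton_subset_iff, Finset.mem_Icc] at hS hT
        rw [hex x (by omega) (by omega), hex y (by omega) (by omega)]
    obtain ⟨e, he⟩ := key
    refine ⟨{e}, by simp, fun a b ha hb hfree => he a b ha hb ?_⟩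
    have := hfree e (by simp)
    omega
  | succ k ih =>
    obtain ⟨M, hM⟩ := ih
    refine ⟨3 * (M + 2), fun sgn lo hi hf => ?_⟩
    have hfhi : PFlip k (fun S => sgn (insert hi S)) lo (hi - 1) := by
      intro A hA cA i j l hi1 hij hjl hl hiA hjA hlA h1 h2
      have hhiA : hi ∉ A := fun h => by have := Finset.mem_Icc.1 (hA h); omega
      refine hf (insert hi A) ?_ ?_ i j l (by omega) hij hjl (by omega) ?_ ?_ ?_ ?_ ?_
      · intro z hz
        rcases Finset.mem_insert.1 hz with rfl | h
        · simp; omega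
        · have := Finset.mem_Icc.1 (hA h); simp; omega
      · rw [Finset.card_insert_of_notMem hhiA, cA]
      · simp [hiA]; omega
      · simp [hjA]; omega
      · simp [hlA]; omega
      · rw [Finset.insert_comm i, Finset.insert_comm j]; exact h1
      · rw [Finset.insert_comm j, Finset.insert_comm l]; exact h2
    obtain ⟨C2, cC2, hC2⟩ := hM _ _ _ hfhi
    set C' : Finset ℕ := C2 ∪ {lo, hi} with hC'
    have cC' : C'.card ≤ M + 2 := by
      have h1 := Finset.card_union_le C2 {lo, hi}
      have h3 : ({lo, hi} : Finset ℕ).card ≤ 2 := Finset.card_le_two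
      rw [hC']
      omega
    -- first position where homogeneity from `c` fails
    have hE : ∀ c, ∃ e, ∀ b, c ≤ b → b ≤ hi →
        ((b < e → PHomog (k + 1) sgn c b) ∧ (e ≤ b → ¬ PHomog (k + 1) sgn c e)) := by
      intro c
      classical
      by_cases hex : ∃ e, ¬ PHomog (k + 1) sgn c e
      · refine ⟨Nat.find hex, fun b _ _ => ⟨fun h => ?_, fun _ => Nat.find_spec hex⟩⟩
        have := Nat.find_min hex h
        push Not at this
        exact this
      · push Not at hex
        exact ⟨hi + 1, fun b _ hb => ⟨fun _ => hex b, fun h => by omega⟩⟩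
    choose e he using hE
    refine ⟨C' ∪ (C'.image e ∪ C'.image (fun c => e c + 1)), ?_, ?_⟩
    · have h1 := Finset.card_union_le C' (C'.image e ∪ C'.image (fun c => e c + 1))
      have h2 := Finset.card_union_le (C'.image e) (C'.image (fun c => e c + 1))
      have h3 : (C'.image e).card ≤ C'.card := Finset.card_image_le
      have h4 : (C'.image (fun c => e c + 1)).card ≤ C'.card := Finset.card_image_le
      omega
    intro a b ha hb hfree
    by_cases hab : b ≤ a
    · exact phomog_two k sgn a b (by omega)
    obtain ⟨c, hcC, hca, hcmax⟩ : ∃ c ∈ C', c ≤ a ∧ ∀ c' ∈ C', c' ≤ a → c' ≤ c := by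
      have hne : (C'.filter (· ≤ a)).Nonempty := ⟨lo, by simp [hC', ha]⟩
      refine ⟨(C'.filter (· ≤ a)).max' hne, ?_, ?_, ?_⟩
      · exact (Finset.mem_filter.1 (Finset.max'_mem _ hne)).1
      · exact (Finset.mem_filter.1 (Finset.max'_mem _ hne)).2
      · intro c' h1 h2
        exact Finset.le_max' _ _ (Finset.mem_filter.2 ⟨h1, h2⟩)
    have hfree' : PFree C' c b := by
      intro x hx hxx
      have h1 := hfree x (Finset.mem_union_left _ hx)
      have h2 := hcmax x hx
      omega
    have hloc : lo ≤ c := hcmax lo (by simp [hC']) ha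
    have hf1 := hfree (e c) (by
      apply Finset.mem_union_right; apply Finset.mem_union_left
      exact Finset.mem_image_of_mem _ hcC)
    have hf2 := hfree (e c + 1) (by
      apply Finset.mem_union_right; apply Finset.mem_union_right
      exact Finset.mem_image_of_mem (fun c => e c + 1) hcC)
    obtain ⟨he1, he2⟩ := he c b (by omega) hb
    by_cases hbe : b < e c
    · intro S T hS hT
      have hI : Finset.Icc a b ⊆ Finset.Icc c b := Finset.Icc_subset_Icc hca le_rfl
      exact he1 hbe S T (hS.trans hI) (hT.trans hI)
    have hnh := he2 (by omega)
    have hae : e c + 1 ≤ a := by omega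
    have hbhi : b ≤ hi - 1 := by
      have := hfree' hi (by simp [hC'])
      omega
    have hH2 : PHomog k (fun S => sgn (insert hi S)) c b := hC2 c b hloc hbhi
      (hfree'.mono (fun x hx => by simp [hC', hx]))
    -- the sign preserved upwards
    have hmono : ∃ s, ∀ B : Finset ℕ, B ⊆ Finset.Icc c b → B.card = k + 1 → ∀ x y,
        c ≤ x → x < y → y ≤ b → x ∉ B → y ∉ B → sgn (insert x B) = s → sgn (insert y B) = s := by
      by_cases hB0 : ∃ B0 : Finset ℕ, B0 ⊆ Finset.Icc c b ∧ B0.card = k + 1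
      · obtain ⟨B0, hB0, cB0⟩ := hB0
        refine ⟨sgn (insert hi B0), ?_⟩
        intro B hB cB x y hcx hxy hyb hxB hyB hs
        have hhi := hH2 B B0 hB hB0 cB cB0
        simp only at hhi
        rw [← hhi] at hs ⊢
        have hhi_notin : hi ∉ B := fun h => by have := Finset.mem_Icc.1 (hB h); omega
        by_contra hne
        exact hf B (hB.trans (Finset.Icc_subset_Icc (by omega) (by omega))) cB x y hi (by omega)
          hxy (by omega) le_rfl hxB hyB hhi_notin (by rw [hs]; exact Ne.symm hne) hne
      · exact ⟨true, fun B hB cB => absurd ⟨B, hB, cB⟩ hB0⟩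
    obtain ⟨s, hs⟩ := hmono
    -- a set of sign `s` low down
    have hlow : ∃ S : Finset ℕ, S ⊆ Finset.Icc c (e c) ∧ S.card = k + 1 + 1 ∧ sgn S = s := by
      unfold PHomog at hnh
      push Not at hnh
      obtain ⟨S, T, hS, hT, cS, cT, hST⟩ := hnh
      by_cases h : sgn S = s
      · exact ⟨S, hS, cS, h⟩
      · refine ⟨T, hT, cT, ?_⟩
        revert h hST
        cases sgn S <;> cases sgn T <;> cases s <;> simp
    obtain ⟨S0, hS0, cS0, hsS0⟩ := hlow
    have hall : ∀ T : Finset ℕ, T ⊆ Finset.Icc a b → T.card = k + 1 + 1 → sgn T = s := by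
      intro T hT cT
      refine exchange_up (k + 1) sgn c b s hs T
        (hT.trans (Finset.Icc_subset_Icc hca le_rfl)) _ S0
        (hS0.trans (Finset.Icc_subset_Icc le_rfl (by omega))) cS0 cT rfl ?_ hsS0
      intro x hx y hy
      have h1 := Finset.mem_Icc.1 (hS0 (Finset.mem_sdiff.1 hx).1)
      have h2 := Finset.mem_Icc.1 (hT (Finset.mem_sdiff.1 hy).1)
      omega
    intro S T hS hT cS cT
    rw [hall S hS cS, hall T hT cT]
/-- homogenized point. -/
def PW {d : ℕ} (P : ℕ → Fin d → ℝ) (v : ℕ) : Fin (d + 1) → ℝ := Fin.cons 1 (P v)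

/-- orientation determinant (points as rows). -/
noncomputable def PD {d : ℕ} (P : ℕ → Fin d → ℝ) (f : Fin (d + 1) → ℕ) : ℝ :=
  Matrix.det (Matrix.of fun a => PW P (f a))

/-- sign of a finite set of indices. -/
noncomputable def psgn {d : ℕ} (P : ℕ → Fin d → ℝ) (S : Finset ℕ) : Bool :=
  if h : S.card = d + 1 then decide (0 < PD P (S.orderEmbOfFin h)) else false

/-- extension of a finite sequence by zero. -/
noncomputable def pext {d n : ℕ} (p : Fin n → Fin d → ℝ) (v : ℕ) : Fin d → ℝ :=
  if h : v < n then p ⟨v, h⟩ else 0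

lemma pext_lt {d n : ℕ} (p : Fin n → Fin d → ℝ) {v : ℕ} (h : v < n) : pext p v = p ⟨v, h⟩ := by
  simp [pext, h]

lemma gp_comp {d n : ℕ} {p : Fin n → Fin d → ℝ} (hp : GeneralPosition p) {m : ℕ}
    (hm : m ≤ d + 1) (f : Fin m → ℕ) (hf : Function.Injective f) (hfn : ∀ j, f j < n) :
    AffineIndependent ℝ (fun j => pext p (f j)) := by
  classical
  let f' : Fin m → Fin n := fun j => ⟨f j, hfn j⟩
  have hf' : Function.Injective f' := fun a b h => hf (by simpa [f'] using h)
  have h := hp (Finset.univ.image f') (by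
    rw [Finset.card_image_of_injective _ hf']; simpa using hm)
  let g : Fin m ↪ (Finset.univ.image f' : Finset (Fin n)) :=
    ⟨fun j => ⟨f' j, by simp⟩, fun a b h => hf' (by simpa using h)⟩
  have h2 := h.comp_embedding g
  convert h2 using 1
  funext j
  rw [pext_lt p (hfn j)]
  rfl

lemma PD_ne_zero {d n : ℕ} {p : Fin n → Fin d → ℝ} (hp : GeneralPosition p)
    (f : Fin (d + 1) → ℕ) (hf : Function.Injective f) (hfn : ∀ j, f j < n) :
    PD (pext p) f ≠ 0 := by
  intro h0
  obtain ⟨w, hw, hw0⟩ := Matrix.exists_vecMul_eq_zero_iff.2 h0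
  have haff := gp_comp hp le_rfl f hf hfn
  rw [affineIndependent_iff] at haff
  apply hw
  have hc : ∀ b, ∑ j, w j * PW (pext p) (f j) b = 0 := by
    intro b
    have := congrFun hw0 b
    simpa [Matrix.vecMul, dotProduct] using this
  funext j
  refine haff Finset.univ w ?_ ?_ j (Finset.mem_univ _)
  · simpa [PW] using hc 0
  · funext b
    simpa [PW] using hc b.succ

lemma psgn_of_strictMono {d : ℕ} (P : ℕ → Fin d → ℝ) (f : Fin (d + 1) → ℕ) (hf : StrictMono f) :
    psgn P (Finset.univ.image f) = decide (0 < PD P f) := by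
  have hc : (Finset.univ.image f).card = d + 1 := by
    rw [Finset.card_image_of_injective _ hf.injective]; simp
  have : f = (Finset.univ.image f).orderEmbOfFin hc :=
    Finset.orderEmbOfFin_unique hc (fun x => by simp) hf
  rw [psgn, dif_pos hc, ← this]

/-- homogeneous signs in determinant form -/
lemma homog_det {d n : ℕ} {p : Fin n → Fin d → ℝ} (hp : GeneralPosition p) {a b : ℕ} (hb : b < n)
    (hH : PHomog d (psgn (pext p)) a b) :
    ∃ σ : ℝ, ∀ f : Fin (d + 1) → ℕ, StrictMono f → (∀ j, a ≤ f j ∧ f j ≤ b) →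
      0 < σ * PD (pext p) f := by
  by_cases hex : ∃ f0 : Fin (d + 1) → ℕ, StrictMono f0 ∧ (∀ j, a ≤ f0 j ∧ f0 j ≤ b)
  · obtain ⟨f0, hf0, hab0⟩ := hex
    refine ⟨PD (pext p) f0, fun f hf hab => ?_⟩
    have h0 := PD_ne_zero hp f0 hf0.injective (fun j => lt_of_le_of_lt (hab0 j).2 hb)
    have h1 := PD_ne_zero hp f hf.injective (fun j => lt_of_le_of_lt (hab j).2 hb)
    have h := hH (Finset.univ.image f0) (Finset.univ.image f)
      (by intro x hx; obtain ⟨j, -, rfl⟩ := Finset.mem_image.1 hx; simpa using hab0 j)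
      (by intro x hx; obtain ⟨j, -, rfl⟩ := Finset.mem_image.1 hx; simpa using hab j)
      (by rw [Finset.card_image_of_injective _ hf0.injective]; simp)
      (by rw [Finset.card_image_of_injective _ hf.injective]; simp)
    rw [psgn_of_strictMono _ _ hf0, psgn_of_strictMono _ _ hf, decide_eq_decide] at h
    rcases lt_or_gt_of_ne h0 with h2 | h2
    · have h3 : ¬ 0 < PD (pext p) f := fun h4 => absurd (h.2 h4) (not_lt.2 h2.le)
      exact mul_pos_of_neg_of_neg h2 (lt_of_le_of_ne (not_lt.1 h3) h1)
    · exact mul_pos h2 (h.1 h2)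
  · exact ⟨1, fun f hf hab => absurd ⟨f, hf, hab⟩ hex⟩

/-- points with parameters in `[0,1)` on distinct edges of a homogeneous path have nonzero
determinant. -/
lemma det_path_ne_zero {d n : ℕ} {p : Fin n → Fin d → ℝ} {a b : ℕ} {σ : ℝ}
    (hσ : ∀ f : Fin (d + 1) → ℕ, StrictMono f → (∀ j, a ≤ f j ∧ f j ≤ b) →
      0 < σ * PD (pext p) f)
    (ι : Fin (d + 1) → ℕ) (hι : StrictMono ι) (s : Fin (d + 1) → ℝ)
    (h0 : ∀ j, 0 ≤ s j) (h1 : ∀ j, s j < 1) (hab : ∀ j, a ≤ ι j ∧ ι j ≤ b)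
    (hend : ∀ j, ι j = b → s j = 0) :
    Matrix.det (Matrix.of fun j => s j • PW (pext p) (ι j + 1) + (1 - s j) • PW (pext p) (ι j))
      ≠ 0 := by
  classical
  have hexp : Matrix.det (Matrix.of fun j => s j • PW (pext p) (ι j + 1) +
      (1 - s j) • PW (pext p) (ι j)) = ∑ T : Finset (Fin (d + 1)),
        (∏ j, if j ∈ T then s j else 1 - s j) *
          PD (pext p) (fun j => if j ∈ T then ι j + 1 else ι j) := by
    have h := MultilinearMap.map_add_univ
      (Matrix.detRowAlternating (n := Fin (d + 1)) (R := ℝ)).toMultilinearMap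
      (fun j => s j • PW (pext p) (ι j + 1)) (fun j => (1 - s j) • PW (pext p) (ι j))
    refine Eq.trans h (Finset.sum_congr rfl fun T _ => ?_)
    have h2 := MultilinearMap.map_smul_univ
      (Matrix.detRowAlternating (n := Fin (d + 1)) (R := ℝ)).toMultilinearMap
      (fun j => if j ∈ T then s j else 1 - s j)
      (fun j => PW (pext p) (if j ∈ T then ι j + 1 else ι j))
    refine Eq.trans ?_ h2
    congr 1
    funext j
    by_cases hj : j ∈ T <;> simp [Finset.piecewise, hj]
  have hterm : ∀ T : Finset (Fin (d + 1)), 0 ≤ σ * ((∏ j, if j ∈ T then s j else 1 - s j) *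
          PD (pext p) (fun j => if j ∈ T then ι j + 1 else ι j)) := by
    intro T
    have hprod : 0 ≤ ∏ j, (if j ∈ T then s j else 1 - s j) := by
      apply Finset.prod_nonneg
      intro j _
      split_ifs
      · exact h0 j
      · linarith [h1 j]
    by_cases hz : ∃ j ∈ T, ι j = b
    · obtain ⟨j, hj, hjb⟩ := hz
      rw [Finset.prod_eq_zero (Finset.mem_univ j) (by simp [hj, hend j hjb])]
      simp
    push Not at hz
    by_cases hsm : StrictMono (fun j => if j ∈ T then ι j + 1 else ι j)
    · have := hσ _ hsm (by
        intro j
        have h2 := hab j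
        split_ifs with hj
        · have := hz j hj; omega
        · exact h2)
      calc 0 ≤ (∏ j, (if j ∈ T then s j else 1 - s j)) *
            (σ * PD (pext p) (fun j => if j ∈ T then ι j + 1 else ι j)) :=
              mul_nonneg hprod this.le
        _ = _ := by ring
    · have : PD (pext p) (fun j => if j ∈ T then ι j + 1 else ι j) = 0 := by
        unfold StrictMono at hsm
        push Not at hsm
        obtain ⟨x, y, hxy, hle⟩ := hsm
        apply Matrix.det_zero_of_row_eq hxy.ne
        have h3 := hι hxy
        have h4 : (if x ∈ T then ι x + 1 else ι x) = (if y ∈ T then ι y + 1 else ι y) := by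
          split_ifs at hle ⊢ <;> omega
        exact congrArg (PW (pext p)) h4
      rw [this]; simp
  have hpos : 0 < σ * ((∏ j, if j ∈ (∅ : Finset (Fin (d + 1))) then s j else 1 - s j) *
          PD (pext p) (fun j => if j ∈ (∅ : Finset (Fin (d + 1))) then ι j + 1 else ι j)) := by
    have h2 := hσ ι hι hab
    have h3 : 0 < ∏ j, (1 - s j) := Finset.prod_pos fun j _ => by linarith [h1 j]
    simp only [Finset.notMem_empty, if_false]
    calc 0 < (∏ j, (1 - s j)) * (σ * PD (pext p) ι) := mul_pos h3 h2
      _ = _ := by ring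
  intro hdet
  rw [hexp] at hdet
  have h5 : 0 < σ * ∑ T : Finset (Fin (d + 1)),
        (∏ j, if j ∈ T then s j else 1 - s j) *
          PD (pext p) (fun j => if j ∈ T then ι j + 1 else ι j) := by
    rw [Finset.mul_sum]
    exact Finset.sum_pos' (fun T _ => hterm T) ⟨∅, Finset.mem_univ _, hpos⟩
  rw [hdet] at h5
  simp at h5

lemma convex_of_homog {d n : ℕ} {p : Fin n → Fin d → ℝ} (hp : GeneralPosition p) {a b : ℕ}
    (hab : a ≤ b) (hb : b < n) (hH : PHomog d (psgn (pext p)) a b)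
    (q : Fin (b - a + 1) → Fin d → ℝ) (hq : ∀ i, q i = pext p (a + i)) : PathCrossing d q := by
  classical
  obtain ⟨σ, hσ⟩ := homog_det hp hb hH
  intro h hh hedge
  obtain ⟨u, c, hu, rfl⟩ := hh
  by_contra hgt
  push Not at hgt
  set y : Fin (d + 1) → ℝ := Fin.cons (-c) u with hy
  have hy0 : y ≠ 0 := by
    intro h0
    apply hu
    funext j
    have := congrFun h0 j.succ
    simpa [hy] using this
  have hval : ∀ x : Fin d → ℝ, y ⬝ᵥ (Fin.cons 1 x : Fin (d + 1) → ℝ) = ∑ i, u i * x i - c := by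
    intro x
    simp [hy, dotProduct, Fin.sum_univ_succ]
    ring
  -- parametrize
  have hpar : ∀ x ∈ PathSet q ∩ {x | ∑ i, u i * x i = c}, ∃ (i : ℕ) (s : ℝ), a ≤ i ∧ i ≤ b ∧
      0 ≤ s ∧ s < 1 ∧ (i = b → s = 0) ∧ x = s • pext p (i + 1) + (1 - s) • pext p i := by
    rintro x ⟨hx, -⟩
    simp only [PathSet, mem_iUnion] at hx
    obtain ⟨i, hi, hx⟩ := hx
    obtain ⟨s, t, hs, ht, hst, rfl⟩ := hx
    have e1 := hq i
    have e2 := hq ⟨(i : ℕ) + 1, hi⟩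
    rcases eq_or_ne s 0 with h0 | h0
    · have : t = 1 := by linarith
      refine ⟨a + i + 1, 0, by omega, by omega, le_rfl, one_pos, fun _ => rfl, ?_⟩
      rw [e1, e2, h0, this]
      simp [add_assoc]
    · have : 0 < s := lt_of_le_of_ne hs (Ne.symm h0)
      refine ⟨a + i, t, by omega, by omega, ht, by linarith, fun h => by omega, ?_⟩
      rw [e1, e2]
      have : 1 - t = s := by linarith
      rw [this, add_comm]
      simp [add_assoc]
  choose! idx par hpar using hpar
  have hinj : Set.InjOn idx (PathSet q ∩ {x | ∑ i, u i * x i = c}) := by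
    intro x hx x' hx' hxx
    obtain ⟨g1, g2, g3, g4, g5, g6⟩ := hpar x hx
    obtain ⟨g1', g2', g3', g4', g5', g6'⟩ := hpar x' hx'
    rw [← hxx] at g6' g5'
    by_cases hs : par x = par x'
    · rw [g6, g6', hs]
    exfalso
    have hib : idx x < b := by
      rcases g2.eq_or_lt with h | h
      · exact absurd ((g5 h).trans (g5' h).symm) hs
      · exact h
    have hi1 : idx x - a + 1 < b - a + 1 := by omega
    apply hedge ⟨idx x - a, by omega⟩ hi1
    have e1 := hq ⟨idx x - a, by omega⟩
    have e2 := hq ⟨idx x - a + 1, hi1⟩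
    have k1 : a + (idx x - a) = idx x := by omega
    have k2 : a + (idx x - a + 1) = idx x + 1 := by omega
    simp only [k1, k2] at e1 e2
    rw [e1, e2]
    set X := pext p (idx x)
    set Y := pext p (idx x + 1)
    have hlin : ∀ s t : ℝ, ∑ i, u i * (s • Y + t • X) i = s * (∑ i, u i * Y i) +
        t * ∑ i, u i * X i := by
      intro s t
      rw [Finset.mul_sum, Finset.mul_sum, ← Finset.sum_add_distrib]
      refine Finset.sum_congr rfl fun i _ => ?_
      simp; ring
    have f1 := hx.2
    have f2 := hx'.2
    rw [mem_ofPred_eq, g6, hlin] at f1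
    rw [mem_ofPred_eq, g6', hlin] at f2
    have hXY : ∑ i, u i * Y i = ∑ i, u i * X i := by
      have : (par x - par x') * (∑ i, u i * Y i - ∑ i, u i * X i) = 0 := by linarith
      rcases mul_eq_zero.1 this with h | h
      · exact absurd (by linarith) hs
      · linarith
    rintro z ⟨s, t, hs, ht, hst, rfl⟩
    rw [mem_ofPred_eq, add_comm, hlin, hXY]
    rw [hXY] at f1
    have : t = 1 - s := by linarith
    rw [this]; linarith
  have hge : ((d + 1 : ℕ) : ℕ∞) ≤ (PathSet q ∩ {x | ∑ i, u i * x i = c}).encard := by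
    have := Order.add_one_le_of_lt hgt
    exact_mod_cast this
  obtain ⟨T, hTs, hT⟩ := Set.exists_subset_encard_eq hge
  have hTfin : T.Finite := Set.finite_of_encard_eq_coe hT
  have himg : (idx '' T).encard = ((d + 1 : ℕ) : ℕ∞) := by
    rw [(hinj.mono hTs).encard_image, hT]
  have hIfin := hTfin.image idx
  have hcard : hIfin.toFinset.card = d + 1 := by
    rw [hIfin.encard_eq_coe_toFinset_card] at himg
    exact_mod_cast himg
  have hx : ∀ j : Fin (d + 1), ∃ x ∈ T, idx x = hIfin.toFinset.orderEmbOfFin hcard j := by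
    intro j
    have := Finset.orderEmbOfFin_mem hIfin.toFinset hcard j
    exact (hIfin.mem_toFinset).1 this
  choose x hxT hxi using hx
  have hP := fun j => hpar (x j) (hTs (hxT j))
  refine det_path_ne_zero hσ (fun j => idx (x j)) ?_ (fun j => par (x j)) (fun j => (hP j).2.2.1)
    (fun j => (hP j).2.2.2.1) (fun j => ⟨(hP j).1, (hP j).2.1⟩) (fun j => (hP j).2.2.2.2.1) ?_
  · intro j k hjk
    simp only [hxi]
    exact (hIfin.toFinset.orderEmbOfFin hcard).strictMono hjk
  · rw [← Matrix.exists_mulVec_eq_zero_iff]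
    refine ⟨y, hy0, ?_⟩
    funext j
    have e : par (x j) • PW (pext p) (idx (x j) + 1) + (1 - par (x j)) • PW (pext p) (idx (x j))
        = (Fin.cons 1 (x j) : Fin (d + 1) → ℝ) := by
      conv_rhs => rw [(hP j).2.2.2.2.2]
      funext m
      refine Fin.cases ?_ (fun m => ?_) m
      · simp [PW]
      · simp [PW]
    simp only [Matrix.mulVec, Matrix.of_apply, e, Pi.zero_apply]
    rw [dotProduct_comm, hval]
    have := (hTs (hxT j)).2
    rw [mem_ofPred_eq] at this
    linarith
lemma rank_orderEmb (S : Finset ℕ) {k : ℕ} (h : S.card = k) (q : Fin k) :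
    (S.filter (· < S.orderEmbOfFin h q)).card = q := by
  have : S.filter (· < S.orderEmbOfFin h q) =
      (Finset.Iio q).map (S.orderEmbOfFin h).toEmbedding := by
    ext x
    simp only [Finset.mem_filter, Finset.mem_map, Finset.mem_Iio]
    constructor
    · rintro ⟨hx, hlt⟩
      have : x ∈ Set.range (S.orderEmbOfFin h) := by rw [Finset.range_orderEmbOfFin]; exact hx
      obtain ⟨r, rfl⟩ := this
      exact ⟨r, by simpa using hlt, rfl⟩
    · rintro ⟨r, hr, rfl⟩
      exact ⟨Finset.orderEmbOfFin_mem _ _ _, (S.orderEmbOfFin h).strictMono hr⟩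
  rw [this, Finset.card_map, Fin.card_Iio]

lemma psgn_insert {d : ℕ} (P : ℕ → Fin d → ℝ) (A : Finset ℕ) (hA : A.card = d) (i : ℕ)
    (hi : i ∉ A) : psgn P (insert i A) = decide (0 < (-1 : ℝ) ^ (A.filter (· < i)).card *
      PD P (Fin.cons i (A.orderEmbOfFin hA) : Fin (d + 1) → ℕ)) := by
  have hc : (insert i A).card = d + 1 := by rw [Finset.card_insert_of_notMem hi, hA]
  rw [psgn, dif_pos hc]
  have : i ∈ Set.range ((insert i A).orderEmbOfFin hc) := by
    rw [Finset.range_orderEmbOfFin]; simp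
  obtain ⟨r, hr⟩ := this
  have hrank := rank_orderEmb (insert i A) hc r
  rw [hr] at hrank
  have hf : (insert i A).filter (· < i) = A.filter (· < i) := by
    rw [Finset.filter_insert]; simp
  rw [hf] at hrank
  have hα : (fun k => (insert i A).orderEmbOfFin hc (r.succAbove k)) = A.orderEmbOfFin hA := by
    apply Finset.orderEmbOfFin_unique hA
    · intro x
      have h1 := Finset.orderEmbOfFin_mem (insert i A) hc (r.succAbove x)
      rcases Finset.mem_insert.1 h1 with h | h
      · exact absurd ((insert i A).orderEmbOfFin hc |>.injective (h.trans hr.symm))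
          (Fin.succAbove_ne r x)
      · exact h
    · exact ((insert i A).orderEmbOfFin hc).strictMono.comp (Fin.strictMono_succAbove r)
  have heq : ∀ m, (insert i A).orderEmbOfFin hc m =
      (Fin.cons i (A.orderEmbOfFin hA) : Fin (d + 1) → ℕ) (r.cycleRange m) := by
    intro m
    rcases Fin.eq_self_or_eq_succAbove r m with rfl | ⟨k, rfl⟩
    · rw [Fin.cycleRange_self, hr]; rfl
    · rw [Fin.cycleRange_succAbove, Fin.cons_succ, ← hα]
  have hdet : PD P ((insert i A).orderEmbOfFin hc) = (-1 : ℝ) ^ (A.filter (· < i)).card *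
      PD P (Fin.cons i (A.orderEmbOfFin hA) : Fin (d + 1) → ℕ) := by
    have h1 := Matrix.det_permute r.cycleRange (Matrix.of fun a =>
      PW P ((Fin.cons i (A.orderEmbOfFin hA) : Fin (d + 1) → ℕ) a))
    rw [Fin.sign_cycleRange] at h1
    rw [hrank, PD, PD]
    push_cast at h1
    rw [← h1]
    congr 1
    ext a b
    simp [heq]
  rw [hdet]

lemma seg_subsingleton {d n : ℕ} (hd : 2 ≤ d) {p : Fin n → Fin d → ℝ} (hp : GeneralPosition p)
    {m m' : ℕ} (hm : m + 1 < n) (hm' : m' + 1 < n) (hne : m ≠ m') :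
    (segment ℝ (pext p m) (pext p (m + 1)) ∩
      segment ℝ (pext p m') (pext p (m' + 1))).Subsingleton := by
  rintro x ⟨hx, hx'⟩ y ⟨hy, hy'⟩
  by_contra hxy
  rw [segment_eq_image'] at hx hx' hy hy'
  obtain ⟨s, -, hs⟩ := hx
  obtain ⟨t, -, ht⟩ := hy
  obtain ⟨s', -, hs'⟩ := hx'
  obtain ⟨t', -, ht'⟩ := hy'
  simp only at hs ht hs' ht'
  set X := pext p m
  set e := pext p (m + 1) - X with he
  set X' := pext p m'
  set e' := pext p (m' + 1) - X' with he'
  have hst : s' - t' ≠ 0 := by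
    intro h
    apply hxy
    rw [← hs', ← ht', sub_eq_zero.1 h]
  have hee : e' = ((s' - t')⁻¹ * (s - t)) • e := by
    have h1 : (s' - t') • e' = (s - t) • e := by
      have h2 : X + s • e - (X + t • e) = X' + s' • e' - (X' + t' • e') := by
        rw [hs, ht, hs', ht']
      rw [sub_smul, sub_smul]
      simpa using h2.symm
    rw [mul_smul, ← h1, smul_smul, inv_mul_cancel₀ hst, one_smul]
  set lam := (s' - t')⁻¹ * (s - t)
  have hX' : X' = X + (s - s' * lam) • e := by
    have : X' = X + s • e - s' • e' := by rw [hs, ← hs']; simp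
    rw [this, hee, smul_smul, sub_smul]; abel
  have hY' : pext p (m' + 1) = X + (s - s' * lam + lam) • e := by
    have : pext p (m' + 1) = X' + e' := by rw [he']; abel
    rw [this, hX', hee, add_smul]; abel
  obtain ⟨c, hc1, hc2, hcn, hcμ⟩ : ∃ c, c ≠ m ∧ c ≠ m + 1 ∧ c < n ∧ ∃ μ : ℝ,
      pext p c = X + μ • e := by
    by_cases h : m' = m + 1
    · exact ⟨m' + 1, by omega, by omega, hm', _, hY'⟩
    · exact ⟨m', by omega, by omega, by omega, _, hX'⟩
  obtain ⟨μ, hμ⟩ := hcμ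
  have haff := gp_comp hp (m := 3) (by omega) ![m, m + 1, c] (by
    intro a b hab
    fin_cases a <;> fin_cases b <;> simp at hab ⊢ <;> omega) (by
    intro j; fin_cases j <;> simp <;> omega)
  have : (fun j => pext p (![m, m + 1, c] j)) = ![X, pext p (m + 1), pext p c] := by
    funext j; fin_cases j <;> rfl
  rw [this, affineIndependent_iff_not_collinear_set] at haff
  apply haff
  rw [collinear_iff_of_mem (p₀ := X) (by simp)]
  refine ⟨e, ?_⟩
  intro z hz
  simp only [mem_insert_iff, mem_singleton_iff] at hz
  rcases hz with rfl | rfl | rfl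
  · exact ⟨0, by simp⟩
  · exact ⟨1, by simp [he]⟩
  · exact ⟨μ, by rw [hμ, vadd_eq_add, add_comm]⟩

lemma discrete_ivt (G : ℕ → ℝ) (a b : ℕ) (hab : a ≤ b) (h : G a * G b < 0)
    (h0 : ∀ m, a ≤ m → m ≤ b → G m ≠ 0) : ∃ m, a ≤ m ∧ m < b ∧ G m * G (m + 1) < 0 := by
  by_contra hcon
  push Not at hcon
  have key : ∀ m, a ≤ m → m ≤ b → 0 < G a * G m := by
    intro m ham
    induction m, ham using Nat.le_induction with
    | base => intro hb; exact mul_self_pos.2 (h0 a le_rfl hb)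
    | succ m ham ih =>
      intro hb
      have h1 := ih (by omega)
      have h2 := lt_of_le_of_ne (hcon m ham (by omega))
        (mul_ne_zero (h0 m ham (by omega)) (h0 (m + 1) (by omega) hb)).symm
      have h3 := mul_pos h1 h2
      have h4 : 0 < G m * G m := mul_self_pos.2 (h0 m ham (by omega))
      have h5 : 0 < (G m * G m) * (G a * G (m + 1)) := by
        calc 0 < _ := h3
          _ = _ := by ring
      exact (mul_pos_iff_of_pos_left h4).1 h5
  exact absurd (key b hab le_rfl) (not_lt.2 h.le)

lemma no_alternating {d n : ℕ} (hd : 2 ≤ d) {p : Fin n → Fin d → ℝ} (hp : GeneralPosition p)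
    (hcross : PathCrossing (d + 1) p) (y : Fin (d + 1) → ℝ) (β : Fin (d + 3) → ℕ)
    (hβ : StrictMono β) (hβn : ∀ q, β q < n) (σ : ℝ)
    (halt : ∀ q : Fin (d + 3), 0 < σ * (-1) ^ (q : ℕ) * (y ⬝ᵥ PW (pext p) (β q))) : False := by
  classical
  set val : (Fin d → ℝ) → ℝ := fun x => y ⬝ᵥ (Fin.cons 1 x : Fin (d + 1) → ℝ) with hval
  have hvale : ∀ x, val x = ∑ i : Fin d, y i.succ * x i + y 0 := by
    intro x
    simp [hval, dotProduct, Fin.sum_univ_succ]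
    ring
  have hev : ∀ᶠ t in nhdsWithin (0 : ℝ) (Ioi 0),
      ∀ q : Fin (d + 3), 0 < σ * (-1) ^ (q : ℕ) * (val (pext p (β q)) + t) := by
    rw [Filter.eventually_all]
    intro q
    apply Filter.Eventually.filter_mono nhdsWithin_le_nhds
    have hcont : Continuous fun t : ℝ => σ * (-1) ^ (q : ℕ) * (val (pext p (β q)) + t) := by
      fun_prop
    refine hcont.continuousAt.eventually (lt_mem_nhds ?_)
    simp only [add_zero]
    exact halt q
  set Bad : Set ℝ := (⋃ m ∈ Finset.range n, {-val (pext p m)}) ∪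
    ⋃ m ∈ Finset.range n, ⋃ m' ∈ Finset.range n,
      {t | m + 1 < n ∧ m' + 1 < n ∧ m ≠ m' ∧ t ∈ (fun x => -val x) ''
        (segment ℝ (pext p m) (pext p (m + 1)) ∩ segment ℝ (pext p m') (pext p (m' + 1)))}
    with hBad
  have hBadfin : Bad.Finite := by
    refine Set.Finite.union ?_ ?_
    · exact Set.Finite.biUnion (Finset.finite_toSet _) fun m _ => Set.finite_singleton _
    · refine Set.Finite.biUnion (Finset.finite_toSet _) fun m _ =>
        Set.Finite.biUnion (Finset.finite_toSet _) fun m' _ => ?_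
      by_cases h : m + 1 < n ∧ m' + 1 < n ∧ m ≠ m'
      · refine Set.Finite.subset ((seg_subsingleton hd hp h.1 h.2.1 h.2.2).finite.image
          (fun x => -val x)) ?_
        rintro t ⟨-, -, -, ht⟩
        exact ht
      · convert Set.finite_empty
        ext t
        simp only [mem_ofPred_eq, mem_empty_iff_false, iff_false]
        rintro ⟨h1, h2, h3, -⟩
        exact h ⟨h1, h2, h3⟩
  obtain ⟨δ, hδ, hsub⟩ := mem_nhdsGT_iff_exists_Ioo_subset.1 hev
  obtain ⟨t, ht, htBad⟩ := (Set.Ioo_infinite hδ).exists_notMem_finite hBadfin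
  have halt' := hsub ht
  simp only [mem_ofPred_eq] at halt'
  set G : ℕ → ℝ := fun m => val (pext p m) + t with hG
  have hG0 : ∀ m, m < n → G m ≠ 0 := by
    intro m hm h0
    apply htBad
    left
    simp only [mem_iUnion, Finset.mem_range, mem_singleton_iff]
    exact ⟨m, hm, by simp only [hG] at h0; linarith⟩
  have hm : ∀ q : Fin (d + 2), ∃ m, β q.castSucc ≤ m ∧ m < β q.succ ∧ G m * G (m + 1) < 0 := by
    intro q
    have h1 := halt' q.castSucc
    have h2 := halt' q.succ
    apply discrete_ivt G _ _ (hβ q.castSucc_lt_succ).le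
    · have h3 := mul_pos h1 h2
      simp only [Fin.val_castSucc, Fin.val_succ, pow_succ] at h3
      have h4 : ((-1 : ℝ) ^ (q : ℕ)) * (-1) ^ (q : ℕ) = 1 := by
        rw [← mul_pow]; simp
      have h5 : 0 < (σ * σ) * -(G (β q.castSucc) * G (β q.succ)) := by
        calc 0 < _ := h3
          _ = (σ * σ) * (((-1 : ℝ) ^ (q : ℕ)) * (-1) ^ (q : ℕ)) *
              -(G (β q.castSucc) * G (β q.succ)) := by simp only [hG]; ring
          _ = _ := by rw [h4, mul_one]
      have h6 := (pos_and_pos_or_neg_and_neg_of_mul_pos h5).resolve_right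
        (fun h => absurd h.1 (not_lt.2 (mul_self_nonneg σ)))
      linarith [h6.2]
    · intro m _ hmb
      exact hG0 m (lt_of_le_of_lt hmb (hβn _))
  choose m hm1 hm2 hm3 using hm
  have hmn : ∀ q, m q + 1 < n := fun q => lt_of_le_of_lt (hm2 q) (hβn _)
  have hpt : ∀ q, ∃ x ∈ segment ℝ (pext p (m q)) (pext p (m q + 1)), val x + t = 0 := by
    intro q
    have h := hm3 q
    set a := G (m q) with ha
    set b := G (m q + 1) with hb
    have hab : a - b ≠ 0 := by
      intro h0
      have : a = b := by linarith
      rw [this] at h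
      exact absurd h (not_lt.2 (mul_self_nonneg b))
    have hlin : ∀ s r : ℝ, s + r = 1 → val (s • pext p (m q) + r • pext p (m q + 1)) + t =
        s * a + r * b := by
      intro s r hsr
      have hr : r = 1 - s := by linarith
      have e : ∑ i : Fin d, y i.succ * (s • pext p (m q) + r • pext p (m q + 1)) i =
          s * ∑ i : Fin d, y i.succ * pext p (m q) i +
          r * ∑ i : Fin d, y i.succ * pext p (m q + 1) i := by
        rw [Finset.mul_sum, Finset.mul_sum, ← Finset.sum_add_distrib]
        refine Finset.sum_congr rfl fun i _ => ?_
        simp; ring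
      rw [ha, hb, hG, hvale, e]
      simp only [hvale]
      rw [hr]; ring
    have hs1 : 0 ≤ -b / (a - b) ∧ 0 ≤ a / (a - b) := by
      rcases mul_neg_iff.1 h with ⟨h1, h2⟩ | ⟨h1, h2⟩
      · exact ⟨div_nonneg (by linarith) (by linarith), div_nonneg (by linarith) (by linarith)⟩
      · exact ⟨div_nonneg_of_nonpos (by linarith) (by linarith),
          div_nonneg_of_nonpos (by linarith) (by linarith)⟩
    have hsum : -b / (a - b) + a / (a - b) = 1 := by field_simp; ring
    refine ⟨_, ⟨-b / (a - b), a / (a - b), hs1.1, hs1.2, hsum, rfl⟩, ?_⟩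
    rw [hlin _ _ hsum]; ring
  choose x hxs hx0 using hpt
  have hmlt : ∀ q q', q < q' → m q < m q' := by
    intro q q' hqq
    have h1 : β q.succ ≤ β q'.castSucc := hβ.monotone (by
      rw [Fin.le_def]; simp only [Fin.val_succ, Fin.val_castSucc]; exact hqq)
    exact lt_of_lt_of_le (hm2 q) (h1.trans (hm1 q'))
  have hxne : ∀ q q', q < q' → x q ≠ x q' := by
    intro q q' hqq heq
    apply htBad
    right
    simp only [mem_iUnion, Finset.mem_range]
    refine ⟨m q, by have := hmn q; omega, m q', by have := hmn q'; omega, hmn q, hmn q',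
      (hmlt q q' hqq).ne, x q, ⟨hxs q, ?_⟩, ?_⟩
    · rw [heq]; exact hxs q'
    · have := hx0 q
      simp only; linarith
  have hxinj : Function.Injective x := by
    intro q q' h
    rcases lt_trichotomy q q' with h1 | h1 | h1
    · exact absurd h (hxne _ _ h1)
    · exact h1
    · exact absurd h.symm (hxne _ _ h1)
  have hmem : ∀ z : Fin d → ℝ, z ∈ {z : Fin d → ℝ | ∑ i, y i.succ * z i = -(y 0 + t)} ↔
      val z + t = 0 := by
    intro z
    rw [mem_ofPred_eq, hvale]
    constructor <;> intro h <;> linarith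
  have hu : (fun i : Fin d => y i.succ) ≠ 0 := by
    intro h0
    have h1 : ∀ z, val z = y 0 := by
      intro z
      rw [hvale]
      have : ∀ i : Fin d, y i.succ = 0 := fun i => congrFun h0 i
      simp [this]
    have h2 := hm3 0
    simp only [hG, h1] at h2
    exact absurd h2 (not_lt.2 (mul_self_nonneg _))
  have hcr := hcross {z | ∑ i, y i.succ * z i = -(y 0 + t)} ⟨_, _, hu, rfl⟩ (by
    intro i hi hsub
    have h1 := (hmem _).1 (hsub (left_mem_segment ℝ _ _))
    apply hG0 i i.isLt
    simp only [hG, pext_lt p i.isLt]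
    exact h1)
  have hle : (Set.range x).encard ≤ ((d + 1 : ℕ) : ℕ∞) := by
    refine le_trans (Set.encard_le_encard ?_) hcr
    rintro _ ⟨q, rfl⟩
    refine ⟨?_, (hmem _).2 (hx0 q)⟩
    simp only [PathSet, mem_iUnion]
    refine ⟨⟨m q, by have := hmn q; omega⟩, hmn q, ?_⟩
    have := hxs q
    rwa [pext_lt p (hmn q), pext_lt p (by have := hmn q; omega : m q < n)] at this
  rw [← Set.image_univ, hxinj.encard_image, Set.encard_univ] at hle
  simp at hle

lemma flip_of_crossing {d n : ℕ} (hd : 2 ≤ d) (hn : 0 < n) {p : Fin n → Fin d → ℝ}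
    (hp : GeneralPosition p) (hcross : PathCrossing (d + 1) p) :
    PFlip d (psgn (pext p)) 0 (n - 1) := by
  classical
  intro A hA cA i j l _ hij hjl hl hiA hjA hlA h1 h2
  set α := A.orderEmbOfFin cA with hα
  have hAn : ∀ v ∈ A, v < n := fun v hv => by have := Finset.mem_Icc.1 (hA hv); omega
  set E : ℕ → ℝ := fun v => PD (pext p) (Fin.cons v α : Fin (d + 1) → ℕ) with hE
  have hαA : ∀ k, α k ∈ A := fun k => Finset.orderEmbOfFin_mem A cA k
  have hE0 : ∀ v, v ∉ A → v < n → E v ≠ 0 := by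
    intro v hv hvn
    apply PD_ne_zero hp
    · rw [Fin.cons_injective_iff]
      refine ⟨?_, α.injective⟩
      rintro ⟨k, rfl⟩
      exact hv (hαA k)
    · intro k
      refine Fin.cases ?_ (fun k => ?_) k
      · simpa using hvn
      · simpa using hAn _ (hαA k)
  have hEA : ∀ v ∈ A, E v = 0 := by
    intro v hv
    have : v ∈ Set.range α := by rw [hα, Finset.range_orderEmbOfFin]; exact hv
    obtain ⟨k, rfl⟩ := this
    exact Matrix.det_zero_of_row_eq (Fin.succ_ne_zero k).symm rfl
  have hy0 : ∃ y0 : Fin (d + 1) → ℝ, ∀ v, y0 ⬝ᵥ PW (pext p) v = E v := by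
    refine ⟨fun b => (-1) ^ (b : ℕ) * (Matrix.of (fun (a : Fin d) (c : Fin d) =>
      PW (pext p) (α a) (b.succAbove c))).det, fun v => ?_⟩
    simp only [hE, PD]
    rw [Matrix.det_succ_row_zero, dotProduct]
    refine Finset.sum_congr rfl fun b _ => ?_
    simp only [Matrix.of_apply, Fin.cons_zero]
    rw [mul_right_comm]
    congr 1
  obtain ⟨y0, hy0⟩ := hy0
  set B : Finset ℕ := insert i (insert j (insert l A)) with hB
  have cB : B.card = d + 3 := by
    rw [hB, Finset.card_insert_of_notMem, Finset.card_insert_of_notMem,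
      Finset.card_insert_of_notMem hlA, cA]
    · simp [hjA]; omega
    · simp [hiA]; omega
  set r : ℕ → ℕ := fun v => (B.filter (· < v)).card with hr
  set σ : ℝ := (-1) ^ (A.filter (· < i)).card * E i with hσ
  have hσ0 : σ ≠ 0 := mul_ne_zero (by simp) (hE0 i hiA (by omega))
  have hh : ∃ h : Fin (d + 1) → ℝ, ∀ k, h ⬝ᵥ PW (pext p) (α k) = σ * (-1) ^ r (α k) := by
    set Mt : Matrix (Fin (d + 1)) (Fin (d + 1)) ℝ :=
      Matrix.of fun a => PW (pext p) ((Fin.cons i α : Fin (d + 1) → ℕ) a) with hMt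
    have hdet : IsUnit Mt.det := isUnit_iff_ne_zero.2 (hE0 i hiA (by omega))
    refine ⟨Mt⁻¹.mulVec (Fin.cons 0 fun k => σ * (-1) ^ r (α k)), fun k => ?_⟩
    have h3 : Mt.mulVec (Mt⁻¹.mulVec (Fin.cons 0 fun k => σ * (-1) ^ r (α k))) =
        Fin.cons 0 fun k => σ * (-1) ^ r (α k) := by
      rw [Matrix.mulVec_mulVec, Matrix.mul_nonsing_inv _ hdet, Matrix.one_mulVec]
    have h4 := congrFun h3 k.succ
    rw [Fin.cons_succ] at h4
    rw [← h4, dotProduct_comm]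
    simp [Matrix.mulVec, hMt]
  obtain ⟨h, hh⟩ := hh
  rw [psgn_insert _ _ cA _ hiA, psgn_insert _ _ cA _ hjA, Ne, decide_eq_decide] at h1
  rw [psgn_insert _ _ cA _ hjA, psgn_insert _ _ cA _ hlA, Ne, decide_eq_decide] at h2
  change ¬ (0 < σ ↔ 0 < (-1) ^ (A.filter (· < j)).card * E j) at h1
  change ¬ (0 < (-1) ^ (A.filter (· < j)).card * E j ↔
    0 < (-1) ^ (A.filter (· < l)).card * E l) at h2
  have hj0 : (-1) ^ (A.filter (· < j)).card * E j ≠ 0 :=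
    mul_ne_zero (by simp) (hE0 j hjA (by omega))
  have hl0 : (-1) ^ (A.filter (· < l)).card * E l ≠ 0 :=
    mul_ne_zero (by simp) (hE0 l hlA (by omega))
  have hri : r i = (A.filter (· < i)).card := by
    simp only [hr, hB, Finset.filter_insert]
    rw [if_neg (by omega), if_neg (by omega), if_neg (by omega)]
  have hrj : r j = (A.filter (· < j)).card + 1 := by
    simp only [hr, hB, Finset.filter_insert]
    rw [if_pos (by omega), if_neg (by omega), if_neg (by omega),
      Finset.card_insert_of_notMem (by simp [hiA])]
  have hrl : r l = (A.filter (· < l)).card + 2 := by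
    simp only [hr, hB, Finset.filter_insert]
    rw [if_pos (by omega), if_pos (by omega), if_neg (by omega),
      Finset.card_insert_of_notMem, Finset.card_insert_of_notMem (by simp [hjA])]
    simp [hiA]; omega
  have hpi : 0 < σ * (-1) ^ r i * E i := by
    rw [hri, mul_assoc]; exact mul_self_pos.2 hσ0
  have hpj : 0 < σ * (-1) ^ r j * E j := by
    rw [hrj, pow_succ]
    set w := (-1) ^ (A.filter (· < j)).card * E j with hw
    have : σ * w < 0 := by
      rcases lt_or_gt_of_ne hσ0 with a1 | a1 <;> rcases lt_or_gt_of_ne hj0 with a2 | a2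
      · exact absurd (iff_of_false (not_lt.2 a1.le) (not_lt.2 a2.le)) h1
      · exact mul_neg_of_neg_of_pos a1 a2
      · exact mul_neg_of_pos_of_neg a1 a2
      · exact absurd (iff_of_true a1 a2) h1
    rw [hw] at this
    linarith
  have hpl : 0 < σ * (-1) ^ r l * E l := by
    rw [hrl, pow_add]
    set w := (-1) ^ (A.filter (· < l)).card * E l with hw
    have : 0 < σ * w := by
      rcases lt_or_gt_of_ne hσ0 with a1 | a1 <;> rcases lt_or_gt_of_ne hl0 with a2 | a2
      · exact mul_pos_of_neg_of_neg a1 a2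
      · have b1 := not_lt.2 a1.le
        tauto
      · have b2 := not_lt.2 a2.le
        tauto
      · exact mul_pos a1 a2
    rw [hw] at this
    calc 0 < _ := this
      _ = _ := by ring
  have hev : ∀ᶠ ε in nhdsWithin (0 : ℝ) (Ioi 0), ∀ v ∈ B,
      0 < σ * (-1) ^ r v * ((y0 + ε • h) ⬝ᵥ PW (pext p) v) := by
    rw [Filter.eventually_all_finset]
    intro v hv
    simp only [add_dotProduct, smul_dotProduct, hy0, smul_eq_mul]
    have hgood : 0 < σ * (-1) ^ r v * E v → ∀ᶠ ε in nhdsWithin (0 : ℝ) (Ioi 0),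
        0 < σ * (-1) ^ r v * (E v + ε * h ⬝ᵥ PW (pext p) v) := by
      intro hpos
      apply Filter.Eventually.filter_mono nhdsWithin_le_nhds
      have hcont : Continuous fun ε : ℝ =>
        σ * (-1) ^ r v * (E v + ε * h ⬝ᵥ PW (pext p) v) := by fun_prop
      exact hcont.continuousAt.eventually (lt_mem_nhds (by simpa using hpos))
    simp only [hB, Finset.mem_insert] at hv
    rcases hv with rfl | rfl | rfl | hv
    · exact hgood hpi
    · exact hgood hpj
    · exact hgood hpl
    · rw [hEA v hv]
      have : v ∈ Set.range α := by rw [hα, Finset.range_orderEmbOfFin]; exact hv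
      obtain ⟨k, rfl⟩ := this
      filter_upwards [self_mem_nhdsWithin] with ε hε
      rw [hh]
      have h5 : σ * (-1) ^ r (α k) ≠ 0 := mul_ne_zero hσ0 (by simp)
      have h6 := mul_pos (mem_Ioi.1 hε) (mul_self_pos.2 h5)
      calc 0 < _ := h6
        _ = _ := by ring
  obtain ⟨ε, hε⟩ := hev.exists
  refine no_alternating hd hp hcross (y0 + ε • h) (B.orderEmbOfFin cB)
    (B.orderEmbOfFin cB).strictMono ?_ σ ?_
  · intro q
    have := Finset.orderEmbOfFin_mem B cB q
    simp only [hB, Finset.mem_insert] at this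
    rcases this with h | h | h | h
    · rw [h]; omega
    · rw [h]; omega
    · rw [h]; omega
    · exact hAn _ h
  · intro q
    have h7 := hε _ (Finset.orderEmbOfFin_mem B cB q)
    have h8 : r (B.orderEmbOfFin cB q) = q := rank_orderEmb B cB q
    rw [h8] at h7
    exact h7

/-- For every integer `d ≥ 2` there exists `M = M(d)` such that every
`(d+1)`-crossing polygonal path `p 0 ⋯ p (n-1)` in general position in `ℝ^d` can be
subdivided into at most `M` convex (`d`-crossing) polygonal paths. -/
theorem subdivision_of_polygonal_paths :
    ∀ d : ℕ, 2 ≤ d → ∃ M : ℕ,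
      ∀ (n : ℕ) (p : Fin n → (Fin d → ℝ)), 0 < n →
        GeneralPosition p → PathCrossing (d + 1) p →
        ∃ k : ℕ, k ≤ M ∧ ∃ f : Fin (k + 1) → Fin n,
          (f 0 : ℕ) = 0 ∧ (f (Fin.last k) : ℕ) = n - 1 ∧ StrictMono f ∧
          ∀ j : Fin k,
            PathCrossing d
              (fun i : Fin ((f j.succ : ℕ) - (f j.castSucc : ℕ) + 1) =>
                p ⟨(f j.castSucc : ℕ) + (i : ℕ), by
                  have h1 := i.isLt
                  have h2 := (f j.succ).isLt
                  have h3 := (f j.castSucc).isLt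
                  omega⟩) := by
  intro d hd
  obtain ⟨M, hM⟩ := comb d
  refine ⟨2 * M + 2, fun n p hn hp hcross => ?_⟩
  obtain ⟨C0, cC0, hC0⟩ := hM _ _ _ (flip_of_crossing hd hn hp hcross)
  set C : Finset ℕ := ((C0 ∪ C0.image (fun c => c - 1)) ∪ {0, n - 1}).filter (· < n) with hC
  have cC : C.card ≤ 2 * M + 2 := by
    have h1 := Finset.card_union_le (C0 ∪ C0.image (fun c => c - 1)) {0, n - 1}
    have h2 := Finset.card_union_le C0 (C0.image (fun c => c - 1))
    have h3 : ({0, n - 1} : Finset ℕ).card ≤ 2 := Finset.card_le_two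
    have h4 : (C0.image (fun c => c - 1)).card ≤ C0.card := Finset.card_image_le
    have h5 : C.card ≤ _ := Finset.card_filter_le _ _
    omega
  have hC_lt : ∀ c ∈ C, c < n := fun c hc => (Finset.mem_filter.1 hc).2
  have h0C : 0 ∈ C := by simp [hC, hn]
  have hnC : n - 1 ∈ C := by simp [hC]; omega
  have hpos : 0 < C.card := Finset.card_pos.2 ⟨0, h0C⟩
  obtain ⟨k, hk⟩ : ∃ k, C.card = k + 1 := ⟨C.card - 1, by omega⟩
  set g := C.orderEmbOfFin hk with hg
  have hgC : ∀ j, g j ∈ C := fun j => Finset.orderEmbOfFin_mem C hk j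
  have hsurj : ∀ c ∈ C, ∃ j, g j = c := by
    intro c hc
    have : c ∈ Set.range g := by rw [hg, Finset.range_orderEmbOfFin]; exact hc
    exact this
  refine ⟨k, by omega, fun j => ⟨g j, hC_lt _ (hgC j)⟩, ?_, ?_, ?_, ?_⟩
  · obtain ⟨j, hj⟩ := hsurj 0 h0C
    have := g.monotone (Fin.zero_le j)
    simp only
    omega
  · obtain ⟨j, hj⟩ := hsurj (n - 1) hnC
    have := g.monotone (Fin.le_last j)
    have := hC_lt _ (hgC (Fin.last k))
    simp only
    omega
  · intro a b hab
    exact g.strictMono hab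
  · intro j
    have hlt : g j.castSucc < g j.succ := g.strictMono j.castSucc_lt_succ
    have hbn := hC_lt _ (hgC j.succ)
    refine convex_of_homog hp hlt.le hbn ?_ _ ?_
    · have hgap : ∀ c ∈ C, ¬ (g j.castSucc < c ∧ c < g j.succ) := by
        rintro c hc ⟨h1, h2⟩
        obtain ⟨i, rfl⟩ := hsurj c hc
        have h3 := g.lt_iff_lt.1 h1
        have h4 := g.lt_iff_lt.1 h2
        rw [Fin.lt_def] at h3 h4
        simp only [Fin.val_castSucc, Fin.val_succ] at h3 h4
        omega
      by_cases hshort : g j.succ ≤ g j.castSucc + 1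
      · obtain ⟨d', rfl⟩ : ∃ d', d = d' + 1 := ⟨d - 1, by omega⟩
        exact phomog_two d' _ _ _ hshort
      · apply hC0 _ _ (Nat.zero_le _) (by omega)
        rintro c hc ⟨h1, h2⟩
        have hc1 : c ∈ C := by simp [hC, hc]; omega
        have hc2 : c - 1 ∈ C := by
          rw [hC, Finset.mem_filter]
          refine ⟨?_, by omega⟩
          apply Finset.mem_union_left
          apply Finset.mem_union_right
          exact Finset.mem_image_of_mem (fun c => c - 1) hc
        have h3 := hgap c hc1
        have h4 := hgap (c - 1) hc2
        omega
    · intro i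
      have hi := i.isLt
      dsimp only at hi ⊢
      rw [pext_lt p (by omega)]
end
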